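/- arXiv:1211.0475 — 2 statements merged into one kernel-verified Lean document; each statement's English description precedes it below -/
import Mathlib

section
/- Let 𝒳 ⊆ L⁰₊ and for each n ∈ ℕ define Oₙ^𝒳 := sc{(X − n)₊ : X ∈ 𝒳}. If ⋂ₙ Oₙ^𝒳 = {0}, i.e. the only Y ∈ L⁰₊ belonging to Oₙ^𝒳 for every n ∈ ℕ is Y = 0 a.e., then there exists a probability measure Q on (Ω, F) with Q ~ P such that 𝒳 is uniformly Q-integrable. -/
open MeasureTheory Filter Topology

/-- `L⁰₊`: (representatives of) measurable functions that are nonnegative `P`-a.s. -/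
def L0pos {Ω : Type*} [MeasurableSpace Ω] (P : Measure Ω) : Set (Ω → ℝ) :=
  {X | Measurable X ∧ ∀ᵐ ω ∂P, 0 ≤ X ω}

/-- `sc S`: the solid hull of the convex hull of `S`. -/
def scSet {Ω : Type*} [MeasurableSpace Ω] (P : Measure Ω) (S : Set (Ω → ℝ)) :
    Set (Ω → ℝ) :=
  {Y | Y ∈ L0pos P ∧ ∃ Z ∈ convexHull ℝ S, ∀ᵐ ω ∂P, Y ω ≤ Z ω}

/-- `Oₙ^𝒳 = sc {(X - n)₊ : X ∈ 𝒳}`. -/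
def Oset {Ω : Type*} [MeasurableSpace Ω] (P : Measure Ω) (𝒳 : Set (Ω → ℝ)) (n : ℕ) :
    Set (Ω → ℝ) :=
  scSet P {f | ∃ X ∈ 𝒳, f = fun ω => max (X ω - n) 0}

/-- `𝒳` is uniformly `Q`-integrable:  `sup_{X ∈ 𝒳} E_Q[X 1_{X > n}] → 0`. -/
def UnifInt {Ω : Type*} [MeasurableSpace Ω] (Q : Measure Ω) (𝒳 : Set (Ω → ℝ)) : Prop :=
  Tendsto (fun n : ℕ => ⨆ X ∈ 𝒳, ∫⁻ ω in {ω | (n : ℝ) < X ω}, ENNReal.ofReal (X ω) ∂Q)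
    atTop (𝓝 0)


lemma expneg_integrable {Ω : Type*} [MeasurableSpace Ω] (P : Measure Ω) [IsProbabilityMeasure P]
    {f : Ω → ℝ} (hf : f ∈ L0pos P) : Integrable (fun ω => Real.exp (-f ω)) P := by
  refine Integrable.of_bound (C := 1) (hf.1.neg.exp).aestronglyMeasurable ?_
  filter_upwards [hf.2] with ω h
  rw [Real.norm_eq_abs, abs_of_pos (Real.exp_pos _)]
  exact Real.exp_le_one_iff.2 (by linarith)

lemma keyA {Ω : Type*} [MeasurableSpace Ω] (P : Measure Ω) [IsProbabilityMeasure P]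
    (C : ℕ → Set (Ω → ℝ)) (hne : ∀ n, (C n).Nonempty) (hmono : Antitone C)
    (hconv : ∀ n, Convex ℝ (C n)) (hpos : ∀ n, C n ⊆ L0pos P) :
    ∃ (φ : ℕ → ℕ) (f : ℕ → Ω → ℝ) (v : Ω → ℝ), StrictMono φ ∧ (∀ k, f k ∈ C (φ k)) ∧
      (∀ k, ∀ g ∈ C (φ k), ∫ ω, Real.exp (-f k ω) ∂P ≤ ∫ ω, Real.exp (-g ω) ∂P + (1/2)^k) ∧
      Measurable v ∧ (∀ ω, 0 ≤ v ω ∧ v ω ≤ 1) ∧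
      ∀ᵐ ω ∂P, Tendsto (fun k => Real.exp (-f k ω)) atTop (𝓝 (v ω)) := by
  set J : (Ω → ℝ) → ℝ := fun f => ∫ ω, Real.exp (-f ω) ∂P with hJ
  have hJ0 : ∀ f, 0 ≤ J f := fun f => integral_nonneg fun ω => (Real.exp_pos _).le
  have hJ1 : ∀ f ∈ L0pos P, J f ≤ 1 := by
    intro f hf
    have : J f ≤ ∫ ω, (1:ℝ) ∂P := by
      apply integral_mono_ae (expneg_integrable P hf) (integrable_const _)
      filter_upwards [hf.2] with ω h
      exact Real.exp_le_one_iff.2 (by linarith)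
    simpa using this
  set I : ℕ → ℝ := fun n => sInf (J '' C n) with hI
  have hbdd : ∀ n, BddBelow (J '' C n) := fun n => ⟨0, by rintro _ ⟨f, _, rfl⟩; exact hJ0 f⟩
  have hIle : ∀ n, ∀ f ∈ C n, I n ≤ J f := fun n f hf => csInf_le (hbdd n) ⟨f, hf, rfl⟩
  have hImono : Monotone I := by
    intro m n hmn
    exact csInf_le_csInf (hbdd m) ((hne n).image _) (Set.image_mono (hmono hmn))
  have hI1 : BddAbove (Set.range I) := by
    refine ⟨1, ?_⟩
    rintro _ ⟨n, rfl⟩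
    obtain ⟨f, hf⟩ := hne n
    exact (hIle n f hf).trans (hJ1 f (hpos n hf))
  have hlim := tendsto_atTop_ciSup hImono hI1
  set L := ⨆ n, I n with hL
  have hIL : ∀ n, I n ≤ L := fun n => le_ciSup hI1 n
  have hr : ∀ k : ℕ, (0:ℝ) < ((1/2:ℝ)^k)^2/4 := fun k => by positivity
  obtain ⟨φ, hφ, hφL⟩ := extraction_forall_of_eventually
    (P := fun k n => L - ((1/2:ℝ)^k)^2/4 < I n) (fun k => hlim.eventually_const_lt (by linarith [hr k]))
  have hex : ∀ k, ∃ f ∈ C (φ k), J f < I (φ k) + ((1/2:ℝ)^k)^2/4 := by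
    intro k
    obtain ⟨_, ⟨f, hf, rfl⟩, h⟩ := exists_lt_of_csInf_lt ((hne (φ k)).image J)
      (show sInf (J '' C (φ k)) < I (φ k) + ((1/2:ℝ)^k)^2/4 by linarith [hr k])
    exact ⟨f, hf, h⟩
  choose f hfC hfJ using hex
  have hfp : ∀ k, f k ∈ L0pos P := fun k => hpos _ (hfC k)
  set u : ℕ → Ω → ℝ := fun k ω => Real.exp (-(f k ω / 2)) with hu
  have hum : ∀ k, Measurable (u k) := fun k => ((hfp k).1.div_const 2).neg.exp
  have hub : ∀ k, ∀ᵐ ω ∂P, |u k ω| ≤ 1 := by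
    intro k
    filter_upwards [(hfp k).2] with ω h
    rw [abs_of_pos (Real.exp_pos _)]
    exact Real.exp_le_one_iff.2 (by linarith)
  have huI : ∀ k, Integrable (u k) P := fun k =>
    Integrable.of_bound (hum k).aestronglyMeasurable 1 (hub k)
  have hcau : ∀ N n m, N ≤ n → N ≤ m →
      eLpNorm (u n - u m) 1 P < ENNReal.ofReal (2 * (1/2:ℝ)^N) := by
    intro N n m hn hm
    set r : ℝ := (1/2:ℝ)^N with hrdef
    have hr0 : 0 < r := by positivity
    have hrn : ∀ n, N ≤ n → ((1/2:ℝ)^n)^2/4 ≤ r^2/4 := by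
      intro n hn
      have : (1/2:ℝ)^n ≤ r := pow_le_pow_of_le_one (by norm_num) (by norm_num) hn
      gcongr
    set g : Ω → ℝ := (1/2:ℝ) • f n + (1/2:ℝ) • f m with hg
    have hgC : g ∈ C (φ N) := by
      apply hconv
      · exact hmono (hφ.monotone hn) (hfC n)
      · exact hmono (hφ.monotone hm) (hfC m)
      all_goals norm_num
    have hgI := hIle _ g hgC
    have hgL := hφL N
    have e2 : ∫ ω, (u n ω - u m ω)^2 ∂P = J (f n) + J (f m) - 2 * J g := by
      have : ∀ ω, (u n ω - u m ω)^2 = Real.exp (-f n ω) + Real.exp (-f m ω)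
          - 2 * Real.exp (-g ω) := by
        intro ω
        have h1 : Real.exp (-f n ω) = u n ω * u n ω := by
          rw [hu, ← Real.exp_add]; congr 1; ring
        have h2 : Real.exp (-f m ω) = u m ω * u m ω := by
          rw [hu, ← Real.exp_add]; congr 1; ring
        have h3 : Real.exp (-g ω) = u n ω * u m ω := by
          rw [hu, ← Real.exp_add]; congr 1; simp [hg]; ring
        rw [h1, h2, h3]; ring
      simp_rw [this]
      have hadd : Integrable (fun ω => Real.exp (-f n ω) + Real.exp (-f m ω)) P :=
        (expneg_integrable P (hfp n)).add (expneg_integrable P (hfp m))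
      rw [integral_sub hadd ((expneg_integrable P (hpos _ hgC)).const_mul 2),
        integral_add (expneg_integrable P (hfp n)) (expneg_integrable P (hfp m)),
        integral_const_mul]
    have i2 : Integrable (fun ω => (u n ω - u m ω)^2) P := by
      refine Integrable.of_bound (C := 4) (((hum n).sub (hum m)).pow_const 2).aestronglyMeasurable ?_
      filter_upwards [hub n, hub m] with ω h1 h2
      rw [Real.norm_eq_abs, abs_of_nonneg (sq_nonneg _)]
      rw [abs_le] at h1 h2
      nlinarith
    have hd2 : ∫ ω, (u n ω - u m ω)^2 ∂P ≤ r^2 := by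
      rw [e2]
      have h1 := hfJ n
      have h2 := hfJ m
      have h3 := hIL (φ n)
      have h4 := hIL (φ m)
      have := hrn n hn
      have := hrn m hm
      linarith
    have hd1 : ∫ ω, |u n ω - u m ω| ∂P ≤ r := by
      have : ∫ ω, |u n ω - u m ω| ∂P ≤ ∫ ω, ((u n ω - u m ω)^2 * (1/(2*r)) + r/2) ∂P := by
        apply integral_mono ((huI n).sub (huI m)).abs ((i2.mul_const _).add (integrable_const _))
        intro ω
        show |u n ω - u m ω| ≤ (u n ω - u m ω)^2 * (1/(2*r)) + r/2
        rw [← sq_abs (u n ω - u m ω)]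
        have := sq_nonneg (|u n ω - u m ω| - r)
        have e : |u n ω - u m ω| ^ 2 * (1/(2*r)) + r/2 - |u n ω - u m ω|
            = (|u n ω - u m ω| - r)^2/(2*r) := by field_simp; ring
        have : 0 ≤ (|u n ω - u m ω| - r)^2/(2*r) := by positivity
        linarith
      rw [integral_add (i2.mul_const _) (integrable_const _), integral_mul_const] at this
      simp only [integral_const, probReal_univ, smul_eq_mul, one_mul] at this
      have h5 : (∫ ω, (u n ω - u m ω)^2 ∂P) * (1/(2*r)) ≤ r^2 * (1/(2*r)) := by gcongr
      have : r^2 * (1/(2*r)) = r/2 := by field_simp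
      linarith
    rw [eLpNorm_one_eq_lintegral_enorm]
    have e : ∫⁻ x, ‖(u n - u m) x‖ₑ ∂P = ENNReal.ofReal (∫ ω, |u n ω - u m ω| ∂P) := by
      have := ofReal_integral_norm_eq_lintegral_enorm ((huI n).sub (huI m))
      rw [← this]; rfl
    rw [e]
    exact (ENNReal.ofReal_lt_ofReal_iff (by linarith)).2 (by linarith)
  have hB : ∑' N : ℕ, ENNReal.ofReal (2 * (1/2:ℝ)^N) ≠ ⊤ := by
    have : Summable fun N : ℕ => (2 * (1/2:ℝ)^N) :=
      (summable_geometric_of_lt_one (by norm_num) (by norm_num)).mul_left 2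
    exact this.tsum_ofReal_ne_top
  have hae := Lp.ae_tendsto_of_cauchy_eLpNorm (fun n => (hum n).aestronglyMeasurable) le_rfl hB hcau
  obtain ⟨w, hw, hwl⟩ := measurable_limit_of_tendsto_metrizable_ae
    (fun n => (hum n).aemeasurable) hae
  refine ⟨φ, f, fun ω => max 0 (min 1 (w ω ^ 2)), hφ, hfC, ?_, ?_, ?_, ?_⟩
  · intro k g hg
    have h1 := hIle _ g hg
    have h2 := hfJ k
    have h3 : ((1/2:ℝ)^k)^2/4 ≤ (1/2)^k := by
      have a : (1/2:ℝ)^k ≤ 1 := pow_le_one₀ (by norm_num) (by norm_num)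
      have b : (0:ℝ) < (1/2:ℝ)^k := by positivity
      nlinarith
    show J (f k) ≤ J g + _
    linarith
  · exact measurable_const.max (measurable_const.min (hw.pow_const 2))
  · intro ω
    exact ⟨le_max_left _ _, max_le zero_le_one (min_le_left _ _)⟩
  · have hfa : ∀ᵐ ω ∂P, ∀ k, 0 ≤ f k ω := ae_all_iff.2 fun k => (hfp k).2
    filter_upwards [hwl, hfa] with ω h1 h2
    have h3 : Tendsto (fun k => Real.exp (-f k ω)) atTop (𝓝 (w ω ^ 2)) := by
      refine (h1.pow 2).congr fun k => ?_
      rw [hu, sq, ← Real.exp_add]; congr 1; ring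
    have h4 : w ω ^ 2 ≤ 1 := le_of_tendsto' h3 fun k => Real.exp_le_one_iff.2 (by linarith [h2 k])
    rw [min_eq_right h4, max_eq_right (sq_nonneg _)]
    exact h3

/-- For a convex set of nonnegative functions, a density under which it is bounded. -/
lemma keyB {Ω : Type*} [MeasurableSpace Ω] (P : Measure Ω) [IsProbabilityMeasure P]
    (C : Set (Ω → ℝ)) (hne : C.Nonempty) (hconv : Convex ℝ C) (hpos : C ⊆ L0pos P)
    (c : ℝ) (hc : ∀ f ∈ C, c ≤ ∫ ω, Real.exp (-f ω) ∂P) :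
    ∃ v : Ω → ℝ, Measurable v ∧ (∀ ω, 0 ≤ v ω ∧ v ω ≤ 1) ∧ c ≤ ∫ ω, v ω ∂P ∧
      ∀ f ∈ C, ∀ m : ℕ, (∀ᵐ ω ∂P, f ω ≤ m) → ∫ ω, v ω * f ω ∂P ≤ 6 := by
  obtain ⟨φ, f, v, -, hfC, hmin, hvm, hv, hlim⟩ := keyA P (fun _ => C) (fun _ => hne)
    (fun _ _ _ => le_rfl) (fun _ => hconv) (fun _ => hpos)
  have hfa : ∀ᵐ ω ∂P, ∀ k, 0 ≤ f k ω := ae_all_iff.2 fun k => (hpos (hfC k)).2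
  refine ⟨v, hvm, hv, ?_, ?_⟩
  · have : Tendsto (fun k => ∫ ω, Real.exp (-f k ω) ∂P) atTop (𝓝 (∫ ω, v ω ∂P)) := by
      refine tendsto_integral_of_dominated_convergence (fun _ => 1)
        (fun k => (hpos (hfC k)).1.neg.exp.aestronglyMeasurable) (integrable_const _) ?_ hlim
      intro k
      filter_upwards [hfa] with ω h
      rw [Real.norm_eq_abs, abs_of_pos (Real.exp_pos _)]
      exact Real.exp_le_one_iff.2 (by linarith [h k])
    exact ge_of_tendsto' this fun k => hc _ (hfC k)
  · intro g hg m hgm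
    have hg0 := (hpos hg).2
    have hgmeas := (hpos hg).1
    set t : ℝ := 1 / (2 * (m + 1)) with ht
    have hm0 : (0:ℝ) ≤ m := Nat.cast_nonneg m
    have ht0 : 0 < t := by positivity
    have ht1 : t ≤ 1/2 := by
      rw [ht]; apply one_div_le_one_div_of_le <;> linarith
    have htm : t * m ≤ 1 := by
      rw [ht, one_div, inv_mul_le_iff₀ (by positivity)]; linarith
    have hbound : ∀ k, ∀ᵐ ω ∂P, ‖Real.exp (-f k ω) * g ω‖ ≤ m := by
      intro k
      filter_upwards [hfa, hg0, hgm] with ω h1 h2 h3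
      rw [Real.norm_eq_abs, abs_of_nonneg (mul_nonneg (Real.exp_pos _).le h2)]
      have := Real.exp_le_one_iff.2 (by linarith [h1 k] : -f k ω ≤ 0)
      calc _ ≤ 1 * g ω := by gcongr
        _ ≤ m := by linarith
    have hmeas : ∀ k, AEStronglyMeasurable (fun ω => Real.exp (-f k ω) * g ω) P := fun k =>
      ((hpos (hfC k)).1.neg.exp.mul hgmeas).aestronglyMeasurable
    have hl : Tendsto (fun k => ∫ ω, Real.exp (-f k ω) * g ω ∂P) atTop (𝓝 (∫ ω, v ω * g ω ∂P)) := by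
      refine tendsto_integral_of_dominated_convergence (fun _ => (m:ℝ)) hmeas
        (integrable_const _) hbound ?_
      filter_upwards [hlim] with ω h
      exact h.mul_const _
    have hr : Tendsto (fun k : ℕ => 3 * (2 + (1/2:ℝ)^k / t)) atTop (𝓝 (3 * (2 + 0 / t))) :=
      ((((tendsto_pow_atTop_nhds_zero_of_lt_one (by norm_num) (by norm_num)).div_const t).const_add
        2).const_mul 3)
    have h6 : (3 * (2 + 0 / t)) = 6 := by norm_num
    rw [h6] at hr
    refine le_of_tendsto_of_tendsto' hl hr fun k => ?_
    set z : Ω → ℝ := (1 - t) • f k + t • g with hz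
    have hzC : z ∈ C := hconv (hfC k) hg (by linarith) ht0.le (by ring)
    have hzm := hmin k z hzC
    have i1 := expneg_integrable P (hpos (hfC k))
    have i2 := expneg_integrable P (hpos hzC)
    have hle : ∫ ω, Real.exp (-f k ω) * g ω ∂P ≤
        ∫ ω, 3 * (2 + (Real.exp (-f k ω) - Real.exp (-z ω)) / t) ∂P := by
      apply integral_mono_ae (Integrable.of_bound (hmeas k) _ (hbound k))
      · exact ((integrable_const _).add ((i1.sub i2).div_const _)).const_mul _
      filter_upwards [hfa, hg0, hgm] with ω h1 h2 h3
      have hy := h1 k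
      have hzω : z ω = (1 - t) * f k ω + t * g ω := by simp [hz]
      rw [hzω]
      generalize f k ω = y at *
      generalize g ω = x at *
      set e := Real.exp (-((1 - t) * y + t * x)) with he
      have he0 : 0 < e := Real.exp_pos _
      have a1 : Real.exp (-y) ≤ 3 * e := by
        have : Real.exp (-y) ≤ Real.exp 1 * e := by
          rw [he, ← Real.exp_add]
          apply Real.exp_le_exp.2
          nlinarith
        have := Real.exp_one_lt_d9
        nlinarith
      have a2 : e * (1 + t * (x - y)) ≤ Real.exp (-y) := by
        have : Real.exp (-y) = e * Real.exp (t * (x - y)) := by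
          rw [he, ← Real.exp_add]; congr 1; ring
        rw [this]
        have := Real.add_one_le_exp (t * (x - y))
        gcongr; linarith
      have a3 : e * y ≤ 2 := by
        have b1 : e ≤ Real.exp (-(y/2)) := by
          apply Real.exp_le_exp.2
          nlinarith [mul_nonneg ht0.le h2]
        have b2 := Real.add_one_le_exp (y/2)
        have b3 : Real.exp (-(y/2)) * Real.exp (y/2) = 1 := by rw [← Real.exp_add]; simp
        have b4 := Real.exp_pos (-(y/2))
        nlinarith
      have a4 : e * x ≤ 2 + (Real.exp (-y) - e) / t := by
        rw [← sub_le_iff_le_add', le_div_iff₀ ht0]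
        nlinarith
      calc Real.exp (-y) * x ≤ 3 * e * x := by gcongr
        _ ≤ _ := by linarith
    refine hle.trans ?_
    have i3 : Integrable (fun ω => (Real.exp (-f k ω) - Real.exp (-z ω)) / t) P :=
      (i1.sub i2).div_const _
    rw [integral_const_mul, integral_add (integrable_const _) i3,
      integral_div, integral_sub i1 i2]
    simp only [integral_const, probReal_univ, smul_eq_mul, one_mul]
    gcongr
    linarith

lemma Oset_sub {Ω : Type*} [MeasurableSpace Ω] (P : Measure Ω) (𝒳 : Set (Ω → ℝ)) (n : ℕ) :
    Oset P 𝒳 n ⊆ L0pos P := fun _ h => h.1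

lemma Oset_solid {Ω : Type*} [MeasurableSpace Ω] (P : Measure Ω) (𝒳 : Set (Ω → ℝ)) (n : ℕ)
    {Y Z : Ω → ℝ} (hY : Y ∈ L0pos P) (hZ : Z ∈ Oset P 𝒳 n) (h : ∀ᵐ ω ∂P, Y ω ≤ Z ω) :
    Y ∈ Oset P 𝒳 n := by
  obtain ⟨_, W, hW, hZW⟩ := hZ
  refine ⟨hY, W, hW, ?_⟩
  filter_upwards [h, hZW] with ω h1 h2 using h1.trans h2

lemma L0pos_convex {Ω : Type*} [MeasurableSpace Ω] (P : Measure Ω) : Convex ℝ (L0pos P) := by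
  intro f hf g hg a b ha hb _
  refine ⟨(hf.1.const_smul a).add (hg.1.const_smul b), ?_⟩
  filter_upwards [hf.2, hg.2] with ω h1 h2
  simp only [Pi.add_apply, Pi.smul_apply, smul_eq_mul]
  positivity

lemma Oset_convex {Ω : Type*} [MeasurableSpace Ω] (P : Measure Ω) (𝒳 : Set (Ω → ℝ)) (n : ℕ) :
    Convex ℝ (Oset P 𝒳 n) := by
  rintro f ⟨hf, F, hF, hfF⟩ g ⟨hg, G, hG, hgG⟩ a b ha hb hab
  refine ⟨L0pos_convex P hf hg ha hb hab, a • F + b • G,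
    convex_convexHull ℝ _ hF hG ha hb hab, ?_⟩
  filter_upwards [hfF, hgG] with ω h1 h2
  simp only [Pi.add_apply, Pi.smul_apply, smul_eq_mul]
  gcongr

lemma Oset_antitone {Ω : Type*} [MeasurableSpace Ω] (P : Measure Ω) (𝒳 : Set (Ω → ℝ)) :
    Antitone (Oset P 𝒳) := by
  rintro m n hmn Y ⟨hY, Z, hZ, hYZ⟩
  have hsub : convexHull ℝ {f | ∃ X ∈ 𝒳, f = fun ω => max (X ω - n) 0} ⊆
      {Z : Ω → ℝ | ∃ W ∈ convexHull ℝ {f | ∃ X ∈ 𝒳, f = fun ω => max (X ω - m) 0}, ∀ ω, Z ω ≤ W ω} := by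
    apply convexHull_min
    · rintro _ ⟨X, hX, rfl⟩
      refine ⟨_, subset_convexHull ℝ _ ⟨X, hX, rfl⟩, fun ω => ?_⟩
      have : (m:ℝ) ≤ n := by exact_mod_cast hmn
      exact max_le_max_right _ (by linarith)
    · rintro f ⟨F, hF, hfF⟩ g ⟨G, hG, hgG⟩ a b ha hb hab
      refine ⟨a • F + b • G, convex_convexHull ℝ _ hF hG ha hb hab, fun ω => ?_⟩
      have h1 := hfF ω
      have h2 := hgG ω
      simp only [Pi.add_apply, Pi.smul_apply, smul_eq_mul]
      gcongr
  obtain ⟨W, hW, hZW⟩ := hsub hZ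
  refine ⟨hY, W, hW, ?_⟩
  filter_upwards [hYZ] with ω h using h.trans (hZW ω)

lemma Oset_mem {Ω : Type*} [MeasurableSpace Ω] (P : Measure Ω) (𝒳 : Set (Ω → ℝ))
    (h𝒳 : 𝒳 ⊆ L0pos P) (n : ℕ) {X : Ω → ℝ} (hX : X ∈ 𝒳) :
    (fun ω => max (X ω - n) 0) ∈ Oset P 𝒳 n :=
  ⟨⟨((h𝒳 hX).1.sub_const _).max measurable_const, ae_of_all _ fun _ => le_max_right _ _⟩,
    _, subset_convexHull ℝ _ ⟨X, hX, rfl⟩, ae_of_all _ fun _ => le_rfl⟩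

/-- step 1 -/
lemma keyC {Ω : Type*} [MeasurableSpace Ω] (P : Measure Ω) [IsProbabilityMeasure P]
    (𝒳 : Set (Ω → ℝ)) (h𝒳 : 𝒳 ⊆ L0pos P) (hne : 𝒳.Nonempty)
    (hcap : ∀ Y : Ω → ℝ, (∀ n : ℕ, Y ∈ Oset P 𝒳 n) → ∀ᵐ ω ∂P, Y ω = 0)
    (N : ℝ) (hN : 0 < N) (δ : ℝ) (hδ : 0 < δ) :
    ∃ (n : ℕ) (v : Ω → ℝ), Measurable v ∧ (∀ ω, 0 ≤ v ω ∧ v ω ≤ 1) ∧ 1 - δ ≤ ∫ ω, v ω ∂P ∧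
      ∀ f ∈ Oset P 𝒳 n, ∀ m : ℕ, (∀ᵐ ω ∂P, f ω ≤ m) → ∫ ω, v ω * f ω ∂P ≤ 6 / N := by
  set C : ℕ → Set (Ω → ℝ) := fun n => {f | N⁻¹ • f ∈ Oset P 𝒳 n} with hC
  have hCC : ∀ n, ∀ f ∈ Oset P 𝒳 n, N • f ∈ C n := by
    intro n f hf
    show N⁻¹ • N • f ∈ Oset P 𝒳 n
    rwa [smul_smul, inv_mul_cancel₀ hN.ne', one_smul]
  have hCne : ∀ n, (C n).Nonempty := by
    intro n
    obtain ⟨X, hX⟩ := hne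
    exact ⟨_, hCC n _ (Oset_mem P 𝒳 h𝒳 n hX)⟩
  have hCanti : Antitone C := fun m n hmn f hf => Oset_antitone P 𝒳 hmn hf
  have hCconv : ∀ n, Convex ℝ (C n) := by
    intro n f hf g hg a b ha hb hab
    show N⁻¹ • (a • f + b • g) ∈ Oset P 𝒳 n
    rw [smul_add, smul_comm _ a, smul_comm _ b]
    exact Oset_convex P 𝒳 n hf hg ha hb hab
  have hCpos : ∀ n, C n ⊆ L0pos P := by
    intro n f hf
    have h := Oset_sub P 𝒳 n hf
    have e : f = N • N⁻¹ • f := by rw [smul_smul, mul_inv_cancel₀ hN.ne', one_smul]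
    rw [e]
    refine ⟨h.1.const_smul N, ?_⟩
    filter_upwards [h.2] with ω h1
    exact mul_nonneg hN.le h1
  obtain ⟨φ, f, v, hφ, hfC, hmin, hvm, hv, hlim⟩ := keyA P C hCne hCanti hCconv hCpos
  have hfp : ∀ k, f k ∈ L0pos P := fun k => hCpos _ (hfC k)
  have hfa : ∀ᵐ ω ∂P, ∀ k, 0 ≤ f k ω := ae_all_iff.2 fun k => (hfp k).2
  have hB : ∀ j : ℕ, ∀ᵐ ω ∂P, ¬ ∀ k ≥ j, 1 / ((j:ℝ) + 1) ≤ f k ω := by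
    intro j
    set B : Set Ω := {ω | ∀ k ≥ j, 1 / ((j:ℝ) + 1) ≤ f k ω} with hBdef
    have hBm : MeasurableSet B := by
      have : B = ⋂ k, ⋂ (_ : k ≥ j), {ω | 1 / ((j:ℝ) + 1) ≤ f k ω} := by
        ext ω; simp [hBdef]
      rw [this]
      exact MeasurableSet.iInter fun k => MeasurableSet.iInter fun _ =>
        measurableSet_le measurable_const (hfp k).1
    set Y : Ω → ℝ := B.indicator fun _ => N⁻¹ * (1 / ((j:ℝ) + 1)) with hY
    have hYp : Y ∈ L0pos P := by
      refine ⟨measurable_const.indicator hBm, ae_of_all _ fun ω => ?_⟩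
      exact Set.indicator_nonneg (fun _ _ => by positivity) ω
    have := hcap Y (fun n => by
      have h1 : f (max j n) ∈ C n := hCanti ((le_max_right j n).trans hφ.le_apply) (hfC _)
      refine Oset_solid P 𝒳 n hYp h1 ?_
      filter_upwards [hfa] with ω h2
      by_cases hω : ω ∈ B
      · rw [hY, Set.indicator_of_mem hω]
        simp only [Pi.smul_apply, smul_eq_mul]
        have := hω (max j n) (le_max_left _ _)
        gcongr
      · rw [hY, Set.indicator_of_notMem hω]
        simp only [Pi.smul_apply, smul_eq_mul]
        have := h2 (max j n)
        positivity)
    filter_upwards [this] with ω h hω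
    rw [hY, Set.indicator_of_mem (show ω ∈ B from hω)] at h
    have : 0 < N⁻¹ * (1 / ((j:ℝ) + 1)) := by positivity
    linarith
  have hv1 : ∀ᵐ ω ∂P, v ω = 1 := by
    filter_upwards [ae_all_iff.2 hB, hlim] with ω h1 h2
    by_contra hne
    have hlt : v ω < 1 := lt_of_le_of_ne (hv ω).2 hne
    obtain ⟨q, hq1, hq2⟩ := exists_between hlt
    obtain ⟨K, hK⟩ := eventually_atTop.1 (h2.eventually_lt_const hq1)
    obtain ⟨M, hM⟩ := exists_nat_one_div_lt (by linarith : 0 < 1 - q)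
    refine h1 (max K M) fun k hk => ?_
    have a1 := hK k ((le_max_left _ _).trans hk)
    have a2 := Real.add_one_le_exp (-f k ω)
    have a3 : 1 / (((max K M : ℕ):ℝ) + 1) ≤ 1 / ((M:ℝ) + 1) := by
      apply one_div_le_one_div_of_le (by positivity)
      have : (M:ℝ) ≤ (max K M : ℕ) := by exact_mod_cast le_max_right K M
      linarith
    linarith
  have hl1 : Tendsto (fun k => ∫ ω, Real.exp (-f k ω) ∂P) atTop (𝓝 (∫ ω, v ω ∂P)) := by
    refine tendsto_integral_of_dominated_convergence (fun _ => 1)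
      (fun k => (hfp k).1.neg.exp.aestronglyMeasurable) (integrable_const _) ?_ hlim
    intro k
    filter_upwards [hfa] with ω h
    rw [Real.norm_eq_abs, abs_of_pos (Real.exp_pos _)]
    exact Real.exp_le_one_iff.2 (by linarith [h k])
  have hiv : ∫ ω, v ω ∂P = 1 := by
    rw [integral_congr_ae hv1]; simp
  rw [hiv] at hl1
  have hl2 := hl1.sub (tendsto_pow_atTop_nhds_zero_of_lt_one (r := (1/2:ℝ))
    (by norm_num) (by norm_num))
  obtain ⟨k, hk⟩ := (hl2.eventually_const_lt (by linarith : 1 - δ < 1 - 0)).exists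
  obtain ⟨w, hwm, hw, hwi, hwf⟩ := keyB P (C (φ k)) (hCne _) (hCconv _) (hCpos _) (1 - δ)
    (fun g hg => by linarith [hmin k g hg])
  refine ⟨φ k, w, hwm, hw, hwi, fun g hg m hm => ?_⟩
  obtain ⟨m', hm'⟩ := exists_nat_ge (N * m)
  have := hwf _ (hCC _ g hg) m' (by
    filter_upwards [hm] with ω h
    simp only [Pi.smul_apply, smul_eq_mul]
    exact le_trans (by gcongr) hm')
  rw [le_div_iff₀ hN, ← integral_mul_const]
  refine le_trans (le_of_eq (integral_congr_ae (ae_of_all _ fun ω => ?_))) this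
  show w ω * g ω * N = w ω * (N * g ω)
  ring

lemma keyD {Ω : Type*} [MeasurableSpace Ω] (P : Measure Ω) [IsProbabilityMeasure P]
    (𝒳 : Set (Ω → ℝ)) (h𝒳 : 𝒳 ⊆ L0pos P) (hne : 𝒳.Nonempty)
    (hcap : ∀ Y : Ω → ℝ, (∀ n : ℕ, Y ∈ Oset P 𝒳 n) → ∀ᵐ ω ∂P, Y ω = 0) (k : ℕ) :
    ∃ (n : ℕ) (V : Ω → ENNReal), Measurable V ∧ (∀ ω, V ω ≤ 1) ∧
      P {ω | V ω < 1/2} ≤ ENNReal.ofReal (2 * (1/2)^k) ∧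
      ∀ X ∈ 𝒳, ∫⁻ ω, V ω * ENNReal.ofReal (X ω - n) ∂P ≤ ENNReal.ofReal ((1/2)^k) := by
  have hk : (0:ℝ) < (1/2)^k := by positivity
  obtain ⟨n, v, hvm, hv, hvi, hvf⟩ := keyC P 𝒳 h𝒳 hne hcap (6 * 2^k) (by positivity) ((1/2)^k) hk
  have h6 : 6 / (6 * 2^k) = (1/2:ℝ)^k := by rw [one_div, inv_pow]; field_simp
  rw [h6] at hvf
  have hvI : Integrable v P := Integrable.of_bound (C := 1) hvm.aestronglyMeasurable
    (ae_of_all _ fun ω => by rw [Real.norm_eq_abs, abs_of_nonneg (hv ω).1]; exact (hv ω).2)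
  refine ⟨n, fun ω => ENNReal.ofReal (v ω), hvm.ennreal_ofReal,
    fun ω => ENNReal.ofReal_le_one.2 (hv ω).2, ?_, ?_⟩
  · have h1 := mul_meas_ge_le_integral_of_nonneg (μ := P) (f := fun ω => 1 - v ω)
      (ae_of_all _ fun ω => by simpa using (hv ω).2) ((integrable_const 1).sub hvI) (1/2)
    rw [integral_sub (integrable_const 1) hvI] at h1
    simp only [integral_const, probReal_univ, smul_eq_mul, one_mul] at h1
    have h2 : {ω | ENNReal.ofReal (v ω) < 1/2} ⊆ {ω | 1/2 ≤ 1 - v ω} := by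
      intro ω hω
      simp only [Set.mem_setOf_eq] at hω ⊢
      by_contra hcon
      push Not at hcon
      refine absurd hω (not_lt.2 ?_)
      have : (1/2 : ENNReal) = ENNReal.ofReal (1/2) := by
        rw [ENNReal.ofReal_div_of_pos (by norm_num)]; simp
      rw [this]
      exact ENNReal.ofReal_le_ofReal (by linarith)
    refine (measure_mono h2).trans ?_
    rw [← ofReal_measureReal]
    exact ENNReal.ofReal_le_ofReal (by linarith)
  · intro X hX
    have hXm := (h𝒳 hX).1
    have e : ∀ ω, ENNReal.ofReal (v ω) * ENNReal.ofReal (X ω - n)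
        = ENNReal.ofReal (v ω * max (X ω - n) 0) := by
      intro ω
      rw [ENNReal.ofReal_mul (hv ω).1]
      congr 1
      rcases le_total (X ω - n) 0 with h | h
      · rw [max_eq_right h, ENNReal.ofReal_of_nonpos h]; simp
      · rw [max_eq_left h]
    simp_rw [e]
    set F : ℕ → Ω → ℝ := fun m ω => min (max (X ω - n) 0) m with hF
    have hFm : ∀ m, Measurable (F m) := fun m =>
      ((hXm.sub_const _).max measurable_const).min measurable_const
    have hF0 : ∀ m ω, 0 ≤ F m ω := fun m ω => le_min (le_max_right _ _) (Nat.cast_nonneg m)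
    have hFO : ∀ m, F m ∈ Oset P 𝒳 n := fun m =>
      Oset_solid P 𝒳 n ⟨hFm m, ae_of_all _ (hF0 m)⟩ (Oset_mem P 𝒳 h𝒳 n hX)
        (ae_of_all _ fun ω => min_le_left _ _)
    have ht := lintegral_tendsto_of_tendsto_of_monotone (μ := P)
      (f := fun m ω => ENNReal.ofReal (v ω * F m ω))
      (F := fun ω => ENNReal.ofReal (v ω * max (X ω - n) 0))
      (fun m => (hvm.mul (hFm m)).ennreal_ofReal.aemeasurable)
      (ae_of_all _ fun ω a b hab => ENNReal.ofReal_le_ofReal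
        (mul_le_mul_of_nonneg_left (min_le_min_left _ (by exact_mod_cast hab)) (hv ω).1))
      (ae_of_all _ fun ω => by
        obtain ⟨M, hM⟩ := exists_nat_ge (max (X ω - n) 0)
        refine tendsto_const_nhds.congr' ?_
        filter_upwards [eventually_ge_atTop M] with m hm
        have : (M:ℝ) ≤ m := by exact_mod_cast hm
        simp only [hF]
        rw [min_eq_left (by linarith)])
    refine le_of_tendsto' ht fun m => ?_
    have hint : Integrable (fun ω => v ω * F m ω) P := by
      refine Integrable.of_bound (C := m) (hvm.mul (hFm m)).aestronglyMeasurable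
        (ae_of_all _ fun ω => ?_)
      rw [Real.norm_eq_abs, abs_of_nonneg (mul_nonneg (hv ω).1 (hF0 m ω))]
      calc v ω * F m ω ≤ 1 * m := mul_le_mul (hv ω).2 (min_le_right _ _) (hF0 m ω) zero_le_one
        _ = m := one_mul _
    rw [← ofReal_integral_eq_lintegral_ofReal hint
      (ae_of_all _ fun ω => mul_nonneg (hv ω).1 (hF0 m ω))]
    exact ENNReal.ofReal_le_ofReal (hvf _ (hFO m) m (ae_of_all _ fun ω => min_le_right _ _))

/-- If `⋂ₙ Oₙ^𝒳 = {0}`, there is `Q ~ P` such that `𝒳` is uniformly `Q`-integrable. -/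
theorem stmt_4 {Ω : Type*} [MeasurableSpace Ω] (P : Measure Ω) [IsProbabilityMeasure P]
    (𝒳 : Set (Ω → ℝ)) (h𝒳 : 𝒳 ⊆ L0pos P)
    (hcap : ∀ Y : Ω → ℝ, (∀ n : ℕ, Y ∈ Oset P 𝒳 n) → ∀ᵐ ω ∂P, Y ω = 0) :
    ∃ Q : Measure Ω, IsProbabilityMeasure Q ∧ Q ≪ P ∧ P ≪ Q ∧ UnifInt Q 𝒳 := by
  rcases 𝒳.eq_empty_or_nonempty with rfl | hne
  · refine ⟨P, inferInstance, Measure.AbsolutelyContinuous.rfl, Measure.AbsolutelyContinuous.rfl, ?_⟩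
    simp [UnifInt]
  choose n V hVm hV1 hVP hVX using keyD P 𝒳 h𝒳 hne hcap
  set G : ℕ → Ω → ENNReal := fun j ω => ⨅ k, V (j + k) ω with hG
  have hGm : ∀ j, Measurable (G j) := fun j => Measurable.iInf fun k => hVm _
  have hGV : ∀ j k, j ≤ k → ∀ ω, G j ω ≤ V k ω := by
    intro j k hjk ω
    have := iInf_le (fun i => V (j + i) ω) (k - j)
    simpa [Nat.add_sub_of_le hjk] using this
  have hG1 : ∀ j ω, G j ω ≤ 1 := fun j ω => (hGV j j le_rfl ω).trans (hV1 j ω)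
  -- weights
  set w : ℕ → ENNReal := fun j => ENNReal.ofReal ((1/2)^j / (n j + 1)) with hw
  have hw0 : ∀ j, w j ≠ 0 := fun j => by
    have : (0:ℝ) < (1/2)^j / (n j + 1) := by positivity
    simpa [hw] using this
  have hwsum : ∑' j, w j * (n j + 1) ≠ ⊤ := by
    have e : ∀ j, w j * (n j + 1) = ENNReal.ofReal ((1/2)^j) := by
      intro j
      have : ((n j : ENNReal) + 1) = ENNReal.ofReal (n j + 1) := by
        rw [ENNReal.ofReal_add (by positivity) zero_le_one]; simp
      rw [this, hw, ← ENNReal.ofReal_mul (by positivity)]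
      congr 1; field_simp
    simp_rw [e]
    exact (summable_geometric_of_lt_one (r := (1/2:ℝ)) (by norm_num) (by norm_num)).tsum_ofReal_ne_top
  set H : Ω → ENNReal := fun ω => ∑' j, w j * G j ω with hH
  have hHm : Measurable H := Measurable.ennreal_tsum fun j => (hGm j).const_mul _
  have hHb : ∀ ω, H ω ≤ ∑' j, w j * (n j + 1) := by
    intro ω
    refine ENNReal.tsum_le_tsum fun j => ?_
    gcongr
    exact (hG1 j ω).trans (by simp)
  have hHpos : ∀ᵐ ω ∂P, H ω ≠ 0 := by
    have hs : ∑' k, P {ω | V k ω < 1/2} ≠ ⊤ := by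
      refine ne_top_of_le_ne_top ?_ (ENNReal.tsum_le_tsum hVP)
      exact ((summable_geometric_of_lt_one (r := (1/2:ℝ)) (by norm_num)
        (by norm_num)).mul_left 2).tsum_ofReal_ne_top
    filter_upwards [ae_eventually_notMem hs] with ω hω
    obtain ⟨j, hj⟩ := eventually_atTop.1 hω
    have h1 : 1/2 ≤ G j ω := le_iInf fun k => not_lt.1 (hj (j + k) (by omega))
    have h2 : w j * G j ω ≤ H ω := ENNReal.le_tsum j
    intro h0
    rw [h0, nonpos_iff_eq_zero, mul_eq_zero] at h2
    rcases h2 with h2 | h2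
    · exact hw0 j h2
    · rw [h2] at h1
      simp at h1
  set c := ∫⁻ ω, H ω ∂P with hc
  have hctop : c ≠ ⊤ := by
    refine ne_top_of_le_ne_top hwsum ((lintegral_mono hHb).trans ?_)
    simp
  have hc0 : c ≠ 0 := by
    intro h
    rw [hc, lintegral_eq_zero_iff hHm] at h
    have : ∀ᵐ ω ∂P, False := by
      filter_upwards [h, hHpos] with ω h1 h2 using h2 h1
    simp at this
    exact IsProbabilityMeasure.ne_zero P this
  have hcinv0 : c⁻¹ ≠ 0 := ENNReal.inv_ne_zero.2 hctop
  have hcinvtop : c⁻¹ ≠ ⊤ := ENNReal.inv_ne_top.2 hc0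
  refine ⟨c⁻¹ • P.withDensity H, ⟨?_⟩, ?_, ?_, ?_⟩
  · rw [Measure.smul_apply, withDensity_apply _ MeasurableSet.univ, Measure.restrict_univ,
      smul_eq_mul, ENNReal.inv_mul_cancel hc0 hctop]
  · exact (withDensity_absolutelyContinuous P H).smul_left _
  · exact (withDensity_absolutelyContinuous' hHm.aemeasurable hHpos).trans
      (Measure.absolutelyContinuous_smul hcinv0)
  -- uniform integrability
  set S : ℕ → ℕ → ENNReal := fun j m =>
    ⨆ X ∈ 𝒳, ∫⁻ ω in {ω | (m : ℝ) < X ω}, G j ω * ENNReal.ofReal (X ω) ∂P with hS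
  have hXset : ∀ X ∈ 𝒳, ∀ m : ℕ, MeasurableSet {ω | (m : ℝ) < X ω} := fun X hX m =>
    measurableSet_lt measurable_const (h𝒳 hX).1
  have hSb : ∀ j m, S j m ≤ n j + 1 := by
    intro j m
    refine iSup₂_le fun X hX => ?_
    calc ∫⁻ ω in {ω | (m : ℝ) < X ω}, G j ω * ENNReal.ofReal (X ω) ∂P
        ≤ ∫⁻ ω, G j ω * ENNReal.ofReal (X ω) ∂P := setLIntegral_le_lintegral _ _
      _ ≤ ∫⁻ ω, ((n j : ENNReal) + V j ω * ENNReal.ofReal (X ω - n j)) ∂P := by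
          refine lintegral_mono fun ω => ?_
          have h1 : ENNReal.ofReal (X ω) ≤ n j + ENNReal.ofReal (X ω - n j) := by
            calc ENNReal.ofReal (X ω) = ENNReal.ofReal (n j + (X ω - n j)) := by congr 1; ring
              _ ≤ ENNReal.ofReal (n j) + ENNReal.ofReal (X ω - n j) := ENNReal.ofReal_add_le
              _ = _ := by simp
          calc G j ω * ENNReal.ofReal (X ω) ≤ V j ω * (n j + ENNReal.ofReal (X ω - n j)) :=
                mul_le_mul' (hGV j j le_rfl ω) h1
            _ = V j ω * n j + V j ω * ENNReal.ofReal (X ω - n j) := mul_add _ _ _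
            _ ≤ 1 * n j + V j ω * ENNReal.ofReal (X ω - n j) := by gcongr; exact hV1 j ω
            _ = _ := by rw [one_mul]
      _ = n j + ∫⁻ ω, V j ω * ENNReal.ofReal (X ω - n j) ∂P := by
          rw [lintegral_add_left measurable_const]; simp
      _ ≤ n j + 1 := by
          gcongr
          refine (hVX j X hX).trans (ENNReal.ofReal_le_one.2 ?_)
          exact pow_le_one₀ (by norm_num) (by norm_num)
  have hSk : ∀ j k m, j ≤ k → 2 * n k ≤ m → S j m ≤ ENNReal.ofReal (2 * (1/2)^k) := by
    intro j k m hjk hm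
    have hm' : 2 * (n k : ℝ) ≤ m := by exact_mod_cast hm
    refine iSup₂_le fun X hX => ?_
    calc ∫⁻ ω in {ω | (m : ℝ) < X ω}, G j ω * ENNReal.ofReal (X ω) ∂P
        ≤ ∫⁻ ω in {ω | (m : ℝ) < X ω}, 2 * (V k ω * ENNReal.ofReal (X ω - n k)) ∂P := by
          refine setLIntegral_mono' (hXset X hX m) fun ω hω => ?_
          have hω' : (m:ℝ) < X ω := hω
          have h1 : ENNReal.ofReal (X ω) ≤ 2 * ENNReal.ofReal (X ω - n k) := by
            have : (2:ENNReal) = ENNReal.ofReal 2 := by simp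
            rw [this, ← ENNReal.ofReal_mul (by norm_num)]
            exact ENNReal.ofReal_le_ofReal (by linarith)
          calc G j ω * ENNReal.ofReal (X ω) ≤ V k ω * (2 * ENNReal.ofReal (X ω - n k)) :=
                mul_le_mul' (hGV j k hjk ω) h1
            _ = _ := by ring
      _ ≤ ∫⁻ ω, 2 * (V k ω * ENNReal.ofReal (X ω - n k)) ∂P := setLIntegral_le_lintegral _ _
      _ = 2 * ∫⁻ ω, V k ω * ENNReal.ofReal (X ω - n k) ∂P :=
          lintegral_const_mul _ ((hVm k).mul ((h𝒳 hX).1.sub_const _).ennreal_ofReal)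
      _ ≤ 2 * ENNReal.ofReal ((1/2)^k) := by gcongr; exact hVX k X hX
      _ = _ := by rw [ENNReal.ofReal_mul (by norm_num)]; simp
  have hS0 : ∀ j, Tendsto (S j) atTop (𝓝 0) := by
    intro j
    rw [ENNReal.tendsto_atTop_zero]
    intro ε hε
    have ht : Tendsto (fun k : ℕ => ENNReal.ofReal (2 * (1/2)^k)) atTop (𝓝 0) := by
      have := ENNReal.tendsto_ofReal ((tendsto_pow_atTop_nhds_zero_of_lt_one (r := (1/2:ℝ))
        (by norm_num) (by norm_num)).const_mul 2)
      simpa using this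
    obtain ⟨k, hk1, hk2⟩ := ((ht.eventually_lt_const hε).and (eventually_ge_atTop j)).exists
    exact ⟨2 * n k, fun m hm => (hSk j k m hk2 hm).trans hk1.le⟩
  have hT : Tendsto (fun m => ∑' j, w j * S j m) atTop (𝓝 0) := by
    have := tendsto_lintegral_of_dominated_convergence (μ := (Measure.count : Measure ℕ))
      (F := fun m j => w j * S j m) (f := fun _ => 0) (fun j => w j * (n j + 1))
      (fun m => measurable_of_countable _)
      (fun m => ae_of_all _ fun j => mul_le_mul_right (hSb j m) (w j))
      (by rw [lintegral_count]; exact hwsum)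
      (ae_of_all _ fun j => by
        have := ENNReal.Tendsto.const_mul (hS0 j) (Or.inr (show w j ≠ ⊤ from ENNReal.ofReal_ne_top))
        simpa using this)
    simpa [lintegral_count] using this
  have hT2 : Tendsto (fun m => c⁻¹ * ∑' j, w j * S j m) atTop (𝓝 0) := by
    simpa using ENNReal.Tendsto.const_mul hT (Or.inr hcinvtop)
  refine tendsto_of_tendsto_of_tendsto_of_le_of_le tendsto_const_nhds hT2 (fun _ => zero_le) ?_
  intro m
  refine iSup₂_le fun X hX => ?_
  have hXm : Measurable fun ω => ENNReal.ofReal (X ω) := (h𝒳 hX).1.ennreal_ofReal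
  rw [Measure.restrict_smul, lintegral_smul_measure, smul_eq_mul,
    restrict_withDensity (hXset X hX m), lintegral_withDensity_eq_lintegral_mul _ hHm hXm]
  refine mul_le_mul_right ?_ c⁻¹
  calc ∫⁻ ω in {ω | (m : ℝ) < X ω}, (H * fun ω => ENNReal.ofReal (X ω)) ω ∂P
      = ∫⁻ ω in {ω | (m : ℝ) < X ω}, ∑' j, w j * (G j ω * ENNReal.ofReal (X ω)) ∂P := by
        refine lintegral_congr fun ω => ?_
        simp only [Pi.mul_apply, hH]
        rw [← ENNReal.tsum_mul_right]
        simp_rw [mul_assoc]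
    _ = ∑' j, w j * ∫⁻ ω in {ω | (m : ℝ) < X ω}, G j ω * ENNReal.ofReal (X ω) ∂P := by
        have hGX : ∀ j, Measurable fun ω => G j ω * ENNReal.ofReal (X ω) := fun j =>
          (hGm j).mul hXm
        rw [lintegral_tsum fun j => ((hGX j).const_mul _).aemeasurable]
        congr 1; ext j
        rw [lintegral_const_mul _ (hGX j)]
    _ ≤ ∑' j, w j * S j m := by
        refine ENNReal.tsum_le_tsum fun j => ?_
        gcongr
        exact le_iSup₂ (f := fun (X : Ω → ℝ) (_ : X ∈ 𝒳) =>
          ∫⁻ ω in {ω | (m : ℝ) < X ω}, G j ω * ENNReal.ofReal (X ω) ∂P) X hX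
end

section
/- Let 𝒳 ⊆ L⁰ be an arbitrary set of (a.e.-classes of) real-valued measurable functions, and for each n ∈ ℕ define Oₙ := sc{(|X| − n)₊ : X ∈ 𝒳}. Then ⋂ₙ Oₙ = {0} (the only Y ∈ L⁰₊ belonging to every Oₙ is Y = 0 a.e.) if and only if there exists a probability measure Q ~ P such that 𝒳 is uniformly Q-integrable. -/
open MeasureTheory Filter Topology

/-- `Oₙ = sc {(|X| - n)₊ : X ∈ 𝒳}` for `𝒳 ⊆ L⁰`. -/
def OsetAbs {Ω : Type*} [MeasurableSpace Ω] (P : Measure Ω) (𝒳 : Set (Ω → ℝ)) (n : ℕ) :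
    Set (Ω → ℝ) :=
  scSet P {f | ∃ X ∈ 𝒳, f = fun ω => max (|X ω| - n) 0}

/-- `𝒳 ⊆ L⁰` is uniformly `Q`-integrable: `sup_{X ∈ 𝒳} E_Q[|X| 1_{|X| > n}] → 0`. -/
def UnifIntAbs {Ω : Type*} [MeasurableSpace Ω] (Q : Measure Ω) (𝒳 : Set (Ω → ℝ)) : Prop :=
  Tendsto (fun n : ℕ => ⨆ X ∈ 𝒳, ∫⁻ ω in {ω | (n : ℝ) < |X ω|}, ENNReal.ofReal (|X ω|) ∂Q)
    atTop (𝓝 0)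


lemma hilbert_nested {E : Type*} [NormedAddCommGroup E] [InnerProductSpace ℝ E] [CompleteSpace E]
    (K : ℕ → Set E) (hc : ∀ n, Convex ℝ (K n)) (hne : ∀ n, (K n).Nonempty)
    (hanti : Antitone K) (hb : ∀ n, ∀ u ∈ K n, ‖u‖ ≤ 1) :
    ∃ h, ∀ n, h ∈ closure (K n) := by
  have hmin : ∀ n, ∃ v ∈ closure (K n), ∀ w ∈ closure (K n), ‖v‖ ≤ ‖w‖ := by
    intro n
    obtain ⟨v, hv, hvm⟩ := exists_norm_eq_iInf_of_complete_convex (hne n).closure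
      (isClosed_closure.isComplete) (hc n).closure (0 : E)
    refine ⟨v, hv, fun w hw => ?_⟩
    have : (⨅ w : closure (K n), ‖(0 : E) - w‖) ≤ ‖(0 : E) - w‖ :=
      ciInf_le (f := fun w : closure (K n) => ‖(0 : E) - w‖)
        ⟨0, by rintro _ ⟨x, rfl⟩; exact norm_nonneg _⟩ ⟨w, hw⟩
    rw [← hvm] at this
    simpa using this
  choose v hv hvm using hmin
  have hsub : ∀ m n, m ≤ n → closure (K n) ⊆ closure (K m) := fun m n h => closure_mono (hanti h)
  have hmono : Monotone (fun n => ‖v n‖ ^ 2) := by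
    intro m n hmn
    have := hvm m (v n) (hsub m n hmn (hv n))
    dsimp only
    gcongr
  have hbd : ∀ n, ‖v n‖ ^ 2 ≤ 1 := by
    intro n
    obtain ⟨u, hu⟩ := hne n
    have h1 := hvm n u (subset_closure hu)
    have h2 := hb n u hu
    have h3 := norm_nonneg (v n)
    nlinarith
  have hpar : ∀ m n, m ≤ n → ‖v n - v m‖ ^ 2 ≤ 2 * (‖v n‖ ^ 2 - ‖v m‖ ^ 2) := by
    intro m n hmn
    have hmid : (1/2 : ℝ) • v n + (1/2 : ℝ) • v m ∈ closure (K m) :=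
      (hc m).closure (hsub m n hmn (hv n)) (hv m) (by norm_num) (by norm_num) (by norm_num)
    have h1 := hvm m _ hmid
    rw [← smul_add, norm_smul] at h1
    have h2 := parallelogram_law_with_norm ℝ (v n) (v m)
    have h3 : ‖(1/2 : ℝ)‖ = 1/2 := by norm_num
    rw [h3] at h1
    have h4 := norm_nonneg (v m)
    have h5 := norm_nonneg (v n + v m)
    nlinarith
  have hconv := tendsto_atTop_ciSup hmono ⟨1, by rintro _ ⟨n, rfl⟩; exact hbd n⟩
  have hcs : CauchySeq v := by
    have hc2 := hconv.cauchySeq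
    rw [Metric.cauchySeq_iff'] at hc2 ⊢
    intro ε hε
    obtain ⟨N, hN⟩ := hc2 (ε ^ 2 / 2) (by positivity)
    refine ⟨N, fun n hn => ?_⟩
    have h1 := hN n hn
    rw [Real.dist_eq] at h1
    have h2 := hpar N n hn
    have h3 := le_abs_self (‖v n‖ ^ 2 - ‖v N‖ ^ 2)
    rw [dist_eq_norm]
    exact lt_of_pow_lt_pow_left₀ 2 hε.le (by linarith)
  obtain ⟨h, hh⟩ := cauchySeq_tendsto_of_complete hcs
  refine ⟨h, fun n => isClosed_closure.mem_of_tendsto hh ?_⟩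
  filter_upwards [eventually_ge_atTop n] with m hm
  exact hsub n m hm (hv m)

lemma cheb {Ω : Type*} [MeasurableSpace Ω] {P : Measure Ω} (u v : Lp ℝ 2 P) (a : ℝ) (ha : 0 < a)
    (s : Set Ω) (hs : ∀ᵐ ω ∂P, ω ∈ s → a ≤ |u ω - v ω|) :
    P s ≤ ENNReal.ofReal (‖u - v‖ ^ 2 / a ^ 2) := by
  have h1 := meas_ge_le_mul_pow_eLpNorm_enorm P (p := 2) (by norm_num) (by norm_num)
    (Lp.aestronglyMeasurable (u - v)) (ε := ENNReal.ofReal a) (by simpa using ha)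
  have h2 : P s ≤ P {x | ENNReal.ofReal a ≤ ‖(u - v) x‖ₑ} := by
    apply measure_mono_ae
    filter_upwards [hs, Lp.coeFn_sub u v] with ω h1 h2 h3
    show ENNReal.ofReal a ≤ ‖(u - v) ω‖ₑ
    rw [h2, ← ofReal_norm]
    exact ENNReal.ofReal_le_ofReal (h1 h3)
  refine (h2.trans (h1 (by simp))).trans (le_of_eq ?_)
  rw [← Lp.enorm_def, ← ofReal_norm, div_eq_inv_mul, ENNReal.ofReal_mul (by positivity)]
  simp only [ENNReal.toReal_ofNat, ENNReal.rpow_ofNat]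
  rw [ENNReal.ofReal_inv_of_pos (by positivity), ENNReal.ofReal_pow ha.le, ENNReal.ofReal_pow (norm_nonneg _), ENNReal.inv_pow]

lemma uniform_prob {Ω : Type*} [MeasurableSpace Ω] (P : Measure Ω) [IsProbabilityMeasure P]
    (O : ℕ → Set (Ω → ℝ)) (hnn : ∀ n, ∀ f ∈ O n, ∀ᵐ ω ∂P, 0 ≤ f ω)
    (hme : ∀ n, ∀ f ∈ O n, Measurable f)
    (hconv : ∀ n, Convex ℝ (O n))
    (hsolid : ∀ n, ∀ f ∈ O n, ∀ f' : Ω → ℝ, Measurable f' → (∀ᵐ ω ∂P, 0 ≤ f' ω) →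
      (∀ᵐ ω ∂P, f' ω ≤ f ω) → f' ∈ O n)
    (hanti : Antitone O)
    (hint : ∀ Y : Ω → ℝ, (∀ n, Y ∈ O n) → ∀ᵐ ω ∂P, Y ω = 0)
    (ε η : ℝ) (hε : 0 < ε) (hη : 0 < η) : ∃ n, ∀ Z ∈ O n, P.real {ω | ε < Z ω} ≤ η := by
  by_contra! hcon
  choose Z hZ hZP using hcon
  let c := min ε 1 * η
  have hc : 0 < c := by positivity
  let one : Lp ℝ 2 P := (memLp_const (1 : ℝ)).toLp _
  have hinner : ∀ u : Lp ℝ 2 P, inner ℝ one u = ∫ ω, u ω ∂P := by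
    intro u
    rw [L2.inner_def]
    apply integral_congr_ae
    filter_upwards [MemLp.coeFn_toLp (memLp_const (1 : ℝ) : MemLp (fun _ : Ω => (1:ℝ)) 2 P)] with ω h
    simp [one, h]
  let K : ℕ → Set (Lp ℝ 2 P) := fun n => {u | (⇑u : Ω → ℝ) ∈ O n ∧ ‖u‖ ≤ 1 ∧ c ≤ inner ℝ one u}
  have hKc : ∀ n, Convex ℝ (K n) := by
    rintro n u ⟨hu1, hu2, hu3⟩ v ⟨hv1, hv2, hv3⟩ a b ha hb hab
    have hae : (⇑(a • u + b • v) : Ω → ℝ) =ᵐ[P] a • ⇑u + b • ⇑v := by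
      filter_upwards [Lp.coeFn_add (a • u) (b • v), Lp.coeFn_smul a u, Lp.coeFn_smul b v]
        with ω h1 h2 h3
      rw [h1, Pi.add_apply, h2, h3]; rfl
    have hmem := hconv n hu1 hv1 ha hb hab
    refine ⟨hsolid n _ hmem _ (Lp.stronglyMeasurable _).measurable ?_ ?_, ?_, ?_⟩
    · filter_upwards [hae, hnn n _ hmem] with ω h1 h2
      rw [h1]; exact h2
    · filter_upwards [hae] with ω h1
      rw [h1]
    · have := convex_closedBall (0 : Lp ℝ 2 P) 1 (by simpa using hu2) (by simpa using hv2) ha hb hab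
      simpa using this
    · rw [inner_add_right, inner_smul_right, inner_smul_right]
      calc c = a * c + b * c := by rw [← add_mul, hab, one_mul]
        _ ≤ _ := by gcongr
  have hKa : Antitone K := fun m n hmn u hu => ⟨hanti hmn hu.1, hu.2⟩
  have hKn : ∀ n, (K n).Nonempty := by
    intro n
    let T : Ω → ℝ := fun ω => min (max (Z n ω) 0) 1
    have hZm := hme n _ (hZ n)
    have hTm : Measurable T := (hZm.max measurable_const).min measurable_const
    have hT0 : ∀ ω, 0 ≤ T ω := fun ω => by simp [T]
    have hT1 : ∀ ω, T ω ≤ 1 := fun ω => by simp [T]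
    have hTb : ∀ ω, ‖T ω‖ ≤ 1 := fun ω => by rw [Real.norm_of_nonneg (hT0 ω)]; exact hT1 ω
    have hTL : MemLp T 2 P := MemLp.of_bound hTm.aestronglyMeasurable 1 (Eventually.of_forall hTb)
    have hTi : Integrable T P := Integrable.of_bound hTm.aestronglyMeasurable 1 (Eventually.of_forall hTb)
    have hae := hTL.coeFn_toLp
    refine ⟨hTL.toLp T, hsolid n _ (hZ n) _ (Lp.stronglyMeasurable _).measurable ?_ ?_, ?_, ?_⟩
    · filter_upwards [hae] with ω h
      rw [h]; exact hT0 ω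
    · filter_upwards [hae, hnn n _ (hZ n)] with ω h h2
      rw [h]; simp [T, h2]
    · have := Lp.norm_le_of_ae_bound (f := hTL.toLp T) (C := 1) zero_le_one (by
        filter_upwards [hae] with ω h
        rw [h]; exact hTb ω)
      simpa [measureUnivNNReal] using this
    · rw [hinner, integral_congr_ae hae]
      have h1 := mul_meas_ge_le_integral_of_nonneg (Eventually.of_forall hT0) hTi (min ε 1)
      refine le_trans ?_ h1
      have h2 : P.real {ω | ε < Z n ω} ≤ P.real {ω | min ε 1 ≤ T ω} := by
        refine measureReal_mono ?_ (measure_ne_top _ _)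
        intro ω hω
        have hω : ε < Z n ω := hω
        have : ε ≤ max (Z n ω) 0 := le_max_of_le_left hω.le
        exact min_le_min this le_rfl
      have h3 := (hZP n).le.trans h2
      show min ε 1 * η ≤ _
      gcongr
  obtain ⟨h, hh⟩ := hilbert_nested K hKc hKn hKa (fun n u hu => hu.2.1)
  have hch : c ≤ ∫ ω, h ω ∂P := by
    rw [← hinner]
    have hcl : IsClosed {u : Lp ℝ 2 P | c ≤ inner ℝ one u} :=
      isClosed_le continuous_const (by fun_prop)
    exact closure_minimal (fun u hu => hu.2.2) hcl (hh 0)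
  have hA : ∃ a : ℝ, 0 < a ∧ 0 < P {ω | 2 * a < h ω} := by
    by_contra! hno
    have h0 : ∀ n : ℕ, ∀ᵐ ω ∂P, h ω ≤ 2 * (1 / ((n : ℝ) + 1)) := by
      intro n
      have := hno (1 / ((n : ℝ) + 1)) (by positivity)
      rw [ae_iff]
      simpa using this
    rw [← ae_all_iff] at h0
    have : ∫ ω, h ω ∂P ≤ 0 := by
      apply integral_nonpos_of_ae
      filter_upwards [h0] with ω hω
      have ht : Tendsto (fun n : ℕ => 2 * (1 / ((n : ℝ) + 1))) atTop (𝓝 (2 * 0)) :=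
        tendsto_one_div_add_atTop_nhds_zero_nat.const_mul 2
      rw [mul_zero] at ht
      exact ge_of_tendsto' ht hω
    linarith
  obtain ⟨a, ha, hPA⟩ := hA
  set A := {ω | 2 * a < h ω} with hAdef
  have hhm : Measurable h := (Lp.stronglyMeasurable h).measurable
  have hAm : MeasurableSet A := measurableSet_lt measurable_const hhm
  let β := P.real A
  have hβ : 0 < β := ENNReal.toReal_pos hPA.ne' (measure_ne_top _ _)
  have hW : ∀ n, ∃ u ∈ K n, ‖u - h‖ ^ 2 ≤ a ^ 2 * (β / 2 / 2 / 2 ^ n) := by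
    intro n
    obtain ⟨u, hu, hd⟩ := Metric.mem_closure_iff.1 (hh n) (√(a ^ 2 * (β / 2 / 2 / 2 ^ n))) (by positivity)
    refine ⟨u, hu, ?_⟩
    rw [dist_comm, dist_eq_norm] at hd
    have := (Real.lt_sqrt (norm_nonneg _)).1 hd
    exact this.le
  choose W hWK hWd using hW
  have hWm : ∀ n, Measurable (W n) := fun n => (Lp.stronglyMeasurable (W n)).measurable
  let S : ℕ → Set Ω := fun n => A ∩ {ω | W n ω < a}
  have hSm : ∀ n, MeasurableSet (S n) := fun n => hAm.inter (measurableSet_lt (hWm n) measurable_const)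
  have hS : ∀ n, P (S n) ≤ ENNReal.ofReal (β / 2 / 2 / 2 ^ n) := by
    intro n
    refine (cheb (W n) h a ha (S n) ?_).trans (ENNReal.ofReal_le_ofReal ?_)
    · refine Eventually.of_forall fun ω hω => ?_
      have h1 : 2 * a < h ω := hω.1
      have h2 : W n ω < a := hω.2
      rw [abs_sub_comm]
      exact le_trans (by linarith) (le_abs_self _)
    · rw [div_le_iff₀ (by positivity), mul_comm]
      exact hWd n
  have hSU : P (⋃ n, S n) ≤ ENNReal.ofReal (β / 2) := by
    refine (measure_iUnion_le _).trans ((ENNReal.tsum_le_tsum hS).trans ?_)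
    rw [← ENNReal.ofReal_tsum_of_nonneg (fun n => by positivity) (summable_geometric_two' (β / 2)),
      tsum_geometric_two']
  let B := A \ ⋃ n, S n
  have hBm : MeasurableSet B := hAm.diff (MeasurableSet.iUnion hSm)
  have hY := hint (B.indicator fun _ => a) (fun n => by
    refine hsolid n _ (hWK n).1 _ (measurable_const.indicator hBm) ?_ ?_
    · exact Eventually.of_forall fun ω => Set.indicator_nonneg (fun _ _ => ha.le) ω
    · filter_upwards [hnn n _ (hWK n).1] with ω hω
      by_cases hB : ω ∈ B
      · rw [Set.indicator_of_mem hB]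
        by_contra! hlt
        exact hB.2 (Set.mem_iUnion.2 ⟨n, hB.1, hlt⟩)
      · rw [Set.indicator_of_notMem hB]; exact hω)
  have hB0 : P B = 0 := by
    rw [ae_iff] at hY
    refine measure_mono_null ?_ hY
    intro ω hω
    show ¬ B.indicator (fun _ => a) ω = 0
    rw [Set.indicator_of_mem hω]; exact ha.ne'
  have h1 : P A ≤ P (⋃ n, S n) := by
    calc P A ≤ P (B ∪ ⋃ n, S n) := measure_mono (by intro ω hω; by_cases h : ω ∈ ⋃ n, S n; exact Or.inr h; exact Or.inl ⟨hω, h⟩)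
      _ ≤ P B + P (⋃ n, S n) := measure_union_le _ _
      _ = _ := by rw [hB0, zero_add]
  have h2 : P A = ENNReal.ofReal β := by simp [β, Measure.real]
  rw [h2] at h1
  have := (ENNReal.ofReal_le_ofReal_iff (by positivity)).1 (h1.trans hSU)
  linarith


lemma sep_lemma {Ω : Type*} [MeasurableSpace Ω] (P : Measure Ω) [IsProbabilityMeasure P]
    (D : Set (Ω → ℝ)) (hconv : Convex ℝ D)
    (hlow : ∀ f ∈ D, ∀ f' : Ω → ℝ, (∀ᵐ ω ∂P, f' ω ≤ f ω) → f' ∈ D)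
    (h0 : (fun _ => (0 : ℝ)) ∈ D) (A : Set Ω) (hA : MeasurableSet A) (δ : ℝ) (hδ : 0 < δ)
    (hD : ∀ f ∈ D, δ ≤ P.real (A ∩ {ω | f ω ≤ 1})) :
    ∃ g : Ω → ℝ, Measurable g ∧ (∀ ω, 0 ≤ g ω) ∧ (∀ ω, ω ∉ A → g ω = 0) ∧
      0 < P {ω | 0 < g ω} ∧ ∃ M : ℝ, ∀ f ∈ D, (∀ᵐ ω ∂P, 0 ≤ f ω) → Measurable f →
        ∫⁻ ω, ENNReal.ofReal (g ω) * ENNReal.ofReal (f ω) ∂P ≤ ENNReal.ofReal M := by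
  let K : Set (Lp ℝ 2 P) := {u | (⇑u : Ω → ℝ) ∈ D}
  have hKc : Convex ℝ K := by
    intro u hu v hv a b ha hb hab
    refine hlow _ (hconv hu hv ha hb hab) _ ?_
    filter_upwards [Lp.coeFn_add (a • u) (b • v), Lp.coeFn_smul a u, Lp.coeFn_smul b v]
      with ω h1 h2 h3
    rw [h1, Pi.add_apply, h2, h3]; rfl
  have hu0L : MemLp (A.indicator fun _ => (2 : ℝ)) 2 P := (memLp_const 2).indicator hA
  let u0 : Lp ℝ 2 P := hu0L.toLp _
  have hu0 : u0 ∉ closure K := by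
    intro hcl
    obtain ⟨u, hu, hd⟩ := Metric.mem_closure_iff.1 hcl (√ δ) (by positivity)
    rw [dist_eq_norm, Real.lt_sqrt (norm_nonneg _)] at hd
    have h1 := cheb u0 u 1 one_pos (A ∩ {ω | u ω ≤ 1}) (by
      filter_upwards [hu0L.coeFn_toLp] with ω h hω
      have h2 : u ω ≤ 1 := hω.2
      rw [h, Set.indicator_of_mem hω.1]
      exact le_trans (by linarith) (le_abs_self _))
    have h2 := hD _ hu
    have h3 := ENNReal.toReal_le_of_le_ofReal (by positivity) h1
    have h4 : P.real (A ∩ {ω | u ω ≤ 1}) ≤ ‖u0 - u‖ ^ 2 / 1 ^ 2 := h3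
    norm_num at h4
    linarith
  obtain ⟨φ, c, hφ1, hφ2⟩ := geometric_hahn_banach_closed_point hKc.closure isClosed_closure hu0
  let h : Lp ℝ 2 P := (InnerProductSpace.toDual ℝ (Lp ℝ 2 P)).symm φ
  have hφ : ∀ u, φ u = ∫ ω, h ω * u ω ∂P := by
    intro u
    have : inner ℝ h u = φ u := InnerProductSpace.toDual_symm_apply
    rw [← this, L2.inner_def]
    simp [mul_comm]
  have hK : ∀ u ∈ K, φ u < c := fun u hu => hφ1 u (subset_closure hu)
  have hhm : Measurable h := (Lp.stronglyMeasurable h).measurable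
  have h0K : (0 : Lp ℝ 2 P) ∈ K := hlow _ h0 _ (by
    filter_upwards [Lp.coeFn_zero ℝ 2 P] with ω hω
    rw [hω]; simp)
  have hc : 0 < c := by simpa using hK 0 h0K
  have hint : ∀ u : Lp ℝ 2 P, Integrable (fun ω => h ω * u ω) P := by
    intro u
    have := L2.integrable_inner (𝕜 := ℝ) u h
    simpa using this
  -- `h` is nonnegative
  have hnonneg : ∀ᵐ ω ∂P, 0 ≤ h ω := by
    have hL : MemLp (fun ω => min (h ω) 0) 2 P := by
      refine (Lp.memLp h).mono (hhm.min measurable_const).aestronglyMeasurable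
        (Eventually.of_forall fun ω => ?_)
      rw [Real.norm_eq_abs, Real.norm_eq_abs]
      rcases le_total (h ω) 0 with hh | hh
      · rw [min_eq_left hh]
      · rw [min_eq_right hh]; simp
    let w : Lp ℝ 2 P := hL.toLp _
    have hw := hL.coeFn_toLp
    have hwt : ∀ t : ℝ, 0 ≤ t → t * φ w < c := by
      intro t ht
      have : t • w ∈ K := hlow _ h0 _ (by
        filter_upwards [Lp.coeFn_smul t w, hw] with ω h1 h2
        rw [h1, Pi.smul_apply, h2, smul_eq_mul]
        exact mul_nonpos_of_nonneg_of_nonpos ht (min_le_right _ _))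
      simpa using hK _ this
    have hwle : φ w ≤ 0 := by
      by_contra! hpos
      have := hwt (c / φ w) (by positivity)
      rw [div_mul_cancel₀ _ hpos.ne'] at this
      exact lt_irrefl _ this
    have hnn : ∀ᵐ ω ∂P, 0 ≤ h ω * w ω := by
      filter_upwards [hw] with ω h2
      rw [h2]
      rcases le_total (h ω) 0 with hh | hh
      · rw [min_eq_left hh]; exact mul_self_nonneg _
      · rw [min_eq_right hh]; simp
    have hz : ∫ ω, h ω * w ω ∂P = 0 := le_antisymm (by rw [← hφ]; exact hwle) (integral_nonneg_of_ae hnn)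
    rw [integral_eq_zero_iff_of_nonneg_ae hnn (hint w)] at hz
    filter_upwards [hz, hw] with ω h1 h2
    by_contra! hneg
    rw [h2, min_eq_left hneg.le] at h1
    have : h ω * h ω = 0 := h1
    nlinarith
  refine ⟨A.indicator fun ω => max (h ω) 0, (hhm.max measurable_const).indicator hA,
    fun ω => Set.indicator_nonneg (fun _ _ => le_max_right _ _) ω,
    fun ω hω => Set.indicator_of_notMem hω _, ?_, c, ?_⟩
  · by_contra! hzero
    have hzero : P {ω | 0 < A.indicator (fun ω => max (h ω) 0) ω} = 0 := le_antisymm hzero zero_le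
    have : φ u0 ≤ 0 := by
      rw [hφ]
      apply integral_nonpos_of_ae
      have hz : ∀ᵐ ω ∂P, ¬ 0 < A.indicator (fun ω => max (h ω) 0) ω := by
        rw [ae_iff]; simpa using hzero
      filter_upwards [hz, hu0L.coeFn_toLp] with ω h1 h2
      rw [h2]
      by_cases hω : ω ∈ A
      · rw [Set.indicator_of_mem hω] at h1 ⊢
        have := le_max_left (h ω) 0
        show h ω * 2 ≤ 0
        linarith
      · rw [Set.indicator_of_notMem hω]; simp
    linarith
  · intro f hf hf0 hfm
    have hlim : ∀ m : ℕ, ∫⁻ ω, ENNReal.ofReal (A.indicator (fun ω => max (h ω) 0) ω) *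
        ENNReal.ofReal (min (f ω) m) ∂P ≤ ENNReal.ofReal c := by
      intro m
      let T : Ω → ℝ := A.indicator fun ω => min (max (f ω) 0) m
      have hTm : Measurable T := ((hfm.max measurable_const).min measurable_const).indicator hA
      have hT0 : ∀ ω, 0 ≤ T ω := fun ω => Set.indicator_nonneg (fun _ _ => by positivity) ω
      have hT1 : ∀ ω, T ω ≤ m := fun ω => by
        by_cases hω : ω ∈ A
        · simp [T, hω]
        · simp [T, hω]
      have hTL : MemLp T 2 P := MemLp.of_bound hTm.aestronglyMeasurable m
        (Eventually.of_forall fun ω => by rw [Real.norm_of_nonneg (hT0 ω)]; exact hT1 ω)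
      have hae := hTL.coeFn_toLp
      have hTK : hTL.toLp T ∈ K := hlow _ hf _ (by
        filter_upwards [hae, hf0] with ω h1 h2
        rw [h1]
        by_cases hω : ω ∈ A
        · simp [T, hω, h2]
        · simp [T, hω, h2])
      have h1 := hK _ hTK
      rw [hφ] at h1
      have hnn : ∀ᵐ ω ∂P, 0 ≤ h ω * hTL.toLp T ω := by
        filter_upwards [hae, hnonneg] with ω h1 h2
        rw [h1]; exact mul_nonneg h2 (hT0 ω)
      refine le_trans (le_of_eq ?_) (ENNReal.ofReal_le_ofReal h1.le)
      rw [ofReal_integral_eq_lintegral_ofReal (hint _) hnn]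
      apply lintegral_congr_ae
      filter_upwards [hae, hnonneg, hf0] with ω h1 h2 h3
      rw [h1, ENNReal.ofReal_mul h2]
      by_cases hω : ω ∈ A
      · simp [T, hω, h2, h3]
      · simp [T, hω]
    have hg : Measurable (fun ω => ENNReal.ofReal (A.indicator (fun ω => max (h ω) 0) ω)) :=
      ((hhm.max measurable_const).indicator hA).ennreal_ofReal
    have hsup : ∀ ω, ENNReal.ofReal (A.indicator (fun ω => max (h ω) 0) ω) * ENNReal.ofReal (f ω)
        = ⨆ m : ℕ, ENNReal.ofReal (A.indicator (fun ω => max (h ω) 0) ω) *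
          ENNReal.ofReal (min (f ω) m) := by
      intro ω
      rw [← ENNReal.mul_iSup]
      congr 1
      apply le_antisymm
      · obtain ⟨m, hm⟩ := exists_nat_ge (f ω)
        refine le_iSup_of_le m ?_
        rw [min_eq_left hm]
      · exact iSup_le fun m => ENNReal.ofReal_le_ofReal (min_le_left _ _)
    simp_rw [hsup]
    rw [lintegral_iSup]
    · exact iSup_le hlim
    · intro m
      exact hg.mul (hfm.min measurable_const).ennreal_ofReal
    · intro m n hmn ω
      dsimp only
      gcongr


lemma local_set {Ω : Type*} [MeasurableSpace Ω] (P : Measure Ω) [IsProbabilityMeasure P]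
    (O : ℕ → Set (Ω → ℝ)) (hnn : ∀ n, ∀ f ∈ O n, ∀ᵐ ω ∂P, 0 ≤ f ω)
    (hme : ∀ n, ∀ f ∈ O n, Measurable f)
    (hconv : ∀ n, Convex ℝ (O n))
    (hne : ∀ n, (O n).Nonempty)
    (huni : ∀ ε η : ℝ, 0 < ε → 0 < η → ∃ n, ∀ Z ∈ O n, P.real {ω | ε < Z ω} ≤ η)
    (A : Set Ω) (hA : MeasurableSet A) (hPA : 0 < P A) :
    ∃ B ⊆ A, 0 < P B ∧ MeasurableSet B ∧ ∀ ε : ℝ, 0 < ε → ∃ n, ∀ Z ∈ O n,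
      ∫⁻ ω in B, ENNReal.ofReal (Z ω) ∂P ≤ ENNReal.ofReal ε := by
  let η := P.real A
  have hη : 0 < η := ENNReal.toReal_pos hPA.ne' (measure_ne_top _ _)
  have hch : ∀ k : ℕ, ∃ n, ∀ Z ∈ O n, P.real {ω | 1 / 2 / 4 ^ k < Z ω} ≤ η / 2 / 2 / 2 ^ k :=
    fun k => huni _ _ (by positivity) (by positivity)
  choose n hn using hch
  choose z hz using hne
  let D : Set (Ω → ℝ) := {f | ∃ K : ℕ, ∃ Z : ℕ → Ω → ℝ, (∀ k, Z k ∈ O (n k)) ∧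
    ∀ᵐ ω ∂P, f ω ≤ ∑ k ∈ Finset.range K, 2 ^ k * Z k ω}
  have hDc : Convex ℝ D := by
    rintro f ⟨K, Z, hZ, hf⟩ g ⟨L, Y, hY, hg⟩ a b ha hb hab
    refine ⟨max K L, fun k => a • Z k + b • Y k, fun k => hconv _ (hZ k) (hY k) ha hb hab, ?_⟩
    have hZ0 : ∀ᵐ ω ∂P, ∀ k, 0 ≤ Z k ω := ae_all_iff.2 fun k => hnn _ _ (hZ k)
    have hY0 : ∀ᵐ ω ∂P, ∀ k, 0 ≤ Y k ω := ae_all_iff.2 fun k => hnn _ _ (hY k)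
    filter_upwards [hf, hg, hZ0, hY0] with ω h1 h2 h3 h4
    have h5 : ∑ k ∈ Finset.range K, 2 ^ k * Z k ω ≤ ∑ k ∈ Finset.range (max K L), 2 ^ k * Z k ω :=
      Finset.sum_le_sum_of_subset_of_nonneg (Finset.range_subset_range.2 (le_max_left _ _))
        fun k _ _ => mul_nonneg (by positivity) (h3 k)
    have h6 : ∑ k ∈ Finset.range L, 2 ^ k * Y k ω ≤ ∑ k ∈ Finset.range (max K L), 2 ^ k * Y k ω :=
      Finset.sum_le_sum_of_subset_of_nonneg (Finset.range_subset_range.2 (le_max_right _ _))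
        fun k _ _ => mul_nonneg (by positivity) (h4 k)
    have h7 : ∑ k ∈ Finset.range (max K L), 2 ^ k * (a • Z k + b • Y k) ω
        = a * ∑ k ∈ Finset.range (max K L), 2 ^ k * Z k ω
          + b * ∑ k ∈ Finset.range (max K L), 2 ^ k * Y k ω := by
      rw [Finset.mul_sum, Finset.mul_sum, ← Finset.sum_add_distrib]
      refine Finset.sum_congr rfl fun k _ => ?_
      simp only [Pi.add_apply, Pi.smul_apply, smul_eq_mul]; ring
    rw [h7]
    simp only [Pi.add_apply, Pi.smul_apply, smul_eq_mul]
    have := mul_le_mul_of_nonneg_left (h1.trans h5) ha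
    have := mul_le_mul_of_nonneg_left (h2.trans h6) hb
    linarith
  have hgeo : ∀ K : ℕ, ∀ x : ℝ, 0 ≤ x → ∑ k ∈ Finset.range K, x / 2 / 2 ^ k ≤ x := by
    intro K x hx
    have := (summable_geometric_two' x).sum_le_tsum (Finset.range K) (fun k _ => by positivity)
    rwa [tsum_geometric_two'] at this
  obtain ⟨g, hgm, hg0, hgA, hgpos, M, hM⟩ := sep_lemma P D hDc
    (by
      rintro f ⟨K, Z, hZ, hf⟩ f' hf'
      refine ⟨K, Z, hZ, ?_⟩
      filter_upwards [hf, hf'] with ω h1 h2 using h2.trans h1)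
    ⟨0, fun k => z (n k), fun k => hz _, by simp⟩ A hA (η / 2) (by positivity)
    (by
      rintro f ⟨K, Z, hZ, hf⟩
      have h1 : P A ≤ P ((A ∩ {ω | f ω ≤ 1}) ∪ ⋃ k ∈ Finset.range K, {ω | 1 / 2 / 4 ^ k < Z k ω}) := by
        apply measure_mono_ae
        filter_upwards [hf] with ω h1 hωA
        by_cases hex : ∃ k ∈ Finset.range K, 1 / 2 / 4 ^ k < Z k ω
        · right
          obtain ⟨k, hk, hk2⟩ := hex
          exact Set.mem_biUnion hk hk2
        · left
          push Not at hex
          refine ⟨hωA, h1.trans ?_⟩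
          refine le_trans (Finset.sum_le_sum fun k hk => ?_) (hgeo K 1 zero_le_one)
          calc (2 : ℝ) ^ k * Z k ω ≤ 2 ^ k * (1 / 2 / 4 ^ k) := by gcongr; exact hex k hk
            _ = 1 / 2 / 2 ^ k := by
              have : (4 : ℝ) ^ k = 2 ^ k * 2 ^ k := by rw [← mul_pow]; norm_num
              rw [this]; field_simp
      have h2 : P.real A ≤ P.real ((A ∩ {ω | f ω ≤ 1}) ∪ ⋃ k ∈ Finset.range K, {ω | 1 / 2 / 4 ^ k < Z k ω}) :=
        ENNReal.toReal_mono (measure_ne_top _ _) h1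
      have h3 := measureReal_union_le (μ := P) (A ∩ {ω | f ω ≤ 1}) (⋃ k ∈ Finset.range K, {ω | 1 / 2 / 4 ^ k < Z k ω})
      have h4 := measureReal_biUnion_finset_le (μ := P) (Finset.range K) (fun k => {ω | 1 / 2 / 4 ^ k < Z k ω})
      have h5 := Finset.sum_le_sum (s := Finset.range K) fun k _ => hn k _ (hZ k)
      have h6 := hgeo K (η / 2) (by positivity)
      have h7 : η = P.real A := rfl
      linarith)
  have hm : ∃ m : ℕ, 0 < P {ω | 1 / ((m : ℝ) + 1) < g ω} := by
    by_contra! hno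
    have : P (⋃ m : ℕ, {ω | 1 / ((m : ℝ) + 1) < g ω}) = 0 :=
      measure_iUnion_null fun m => le_antisymm (hno m) zero_le
    refine hgpos.ne' (measure_mono_null ?_ this)
    intro ω hω
    obtain ⟨m, hm⟩ := exists_nat_one_div_lt (show 0 < g ω from hω)
    exact Set.mem_iUnion.2 ⟨m, hm⟩
  obtain ⟨m, hm⟩ := hm
  have hBm : MeasurableSet {ω | 1 / ((m : ℝ) + 1) < g ω} := measurableSet_lt measurable_const hgm
  refine ⟨_, ?_, hm, hBm, ?_⟩
  · intro ω hω
    by_contra hωA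
    have h1 : 1 / ((m : ℝ) + 1) < g ω := hω
    rw [hgA ω hωA] at h1
    exact absurd h1 (not_lt.2 (by positivity))
  · intro ε hε
    obtain ⟨k, hk⟩ : ∃ k : ℕ, ((m : ℝ) + 1) * M / ε < 2 ^ k :=
      pow_unbounded_of_one_lt _ (by norm_num)
    refine ⟨n k, fun Z hZ => ?_⟩
    have hfD : (fun ω => 2 ^ k * Z ω) ∈ D := by
      refine ⟨k + 1, fun j => if h : j = k then Z else z (n j), fun j => ?_, ?_⟩
      · by_cases h : j = k
        · subst h; simpa using hZ
        · simpa [h] using hz _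
      · have : ∀ᵐ ω ∂P, ∀ j, 0 ≤ z (n j) ω := ae_all_iff.2 fun j => hnn _ _ (hz _)
        filter_upwards [this] with ω hω
        rw [Finset.sum_range_succ]
        simp only [dite_true]
        refine le_add_of_nonneg_left (Finset.sum_nonneg fun j hj => ?_)
        have : j ≠ k := (Finset.mem_range.1 hj).ne
        simp only [this, dite_false]
        exact mul_nonneg (by positivity) (hω j)
    have hZ0 := hnn _ _ hZ
    have h1 := hM _ hfD (by
      filter_upwards [hZ0] with ω hω
      exact mul_nonneg (by positivity) hω) ((hme _ _ hZ).const_mul _)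
    have hq : 0 ≤ ((m : ℝ) + 1) / 2 ^ k := by positivity
    calc ∫⁻ ω in {ω | 1 / ((m : ℝ) + 1) < g ω}, ENNReal.ofReal (Z ω) ∂P
        ≤ ∫⁻ ω in {ω | 1 / ((m : ℝ) + 1) < g ω}, ENNReal.ofReal (((m : ℝ) + 1) / 2 ^ k) *
          (ENNReal.ofReal (g ω) * ENNReal.ofReal (2 ^ k * Z ω)) ∂P := by
          apply lintegral_mono_ae
          filter_upwards [ae_restrict_mem hBm, ae_restrict_of_ae hZ0] with ω h2 h3
          have h2 : 1 / ((m : ℝ) + 1) < g ω := h2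
          rw [← ENNReal.ofReal_mul (hg0 ω), ← ENNReal.ofReal_mul hq]
          apply ENNReal.ofReal_le_ofReal
          have h4 : ((m : ℝ) + 1) / 2 ^ k * (g ω * (2 ^ k * Z ω)) = (((m : ℝ) + 1) * g ω) * Z ω := by
            field_simp
          rw [h4]
          rw [div_lt_iff₀ (by positivity)] at h2
          exact le_mul_of_one_le_left h3 (by linarith)
      _ ≤ ∫⁻ ω, ENNReal.ofReal (((m : ℝ) + 1) / 2 ^ k) *
          (ENNReal.ofReal (g ω) * ENNReal.ofReal (2 ^ k * Z ω)) ∂P := setLIntegral_le_lintegral _ _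
      _ = ENNReal.ofReal (((m : ℝ) + 1) / 2 ^ k) *
          ∫⁻ ω, (ENNReal.ofReal (g ω) * ENNReal.ofReal (2 ^ k * Z ω)) ∂P := by
          rw [lintegral_const_mul' _ _ ENNReal.ofReal_ne_top]
      _ ≤ ENNReal.ofReal (((m : ℝ) + 1) / 2 ^ k) * ENNReal.ofReal M := by gcongr
      _ = ENNReal.ofReal (((m : ℝ) + 1) / 2 ^ k * M) := (ENNReal.ofReal_mul hq).symm
      _ ≤ ENNReal.ofReal ε := by
          apply ENNReal.ofReal_le_ofReal
          rw [div_lt_iff₀ hε] at hk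
          rw [div_mul_eq_mul_div, div_le_iff₀ (by positivity)]
          linarith

lemma exhaust {Ω : Type*} [MeasurableSpace Ω] (P : Measure Ω) [IsProbabilityMeasure P]
    (G : Set Ω → Prop) (hm : ∀ B, G B → MeasurableSet B) (hempty : G ∅)
    (hun : ∀ B C, G B → G C → G (B ∪ C))
    (hloc : ∀ A, MeasurableSet A → 0 < P A → ∃ B ⊆ A, 0 < P B ∧ G B) :
    ∃ B : ℕ → Set Ω, (∀ k, G (B k)) ∧ P (⋃ k, B k)ᶜ = 0 := by
  obtain ⟨u, -, hu, huS⟩ := exists_seq_tendsto_sSup (S := {x | ∃ B, G B ∧ P B = x})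
    ⟨_, ∅, hempty, rfl⟩ (OrderTop.bddAbove _)
  choose B hB hBu using huS
  refine ⟨B, hB, ?_⟩
  by_contra hpos
  have hUm : MeasurableSet (⋃ k, B k) := MeasurableSet.iUnion fun k => hm _ (hB k)
  obtain ⟨C, hC, hPC, hGC⟩ := hloc _ hUm.compl (pos_iff_ne_zero.2 hpos)
  set s := sSup {x | ∃ B, G B ∧ P B = x} with hs
  have h1 : ∀ k, u k + P C ≤ s := by
    intro k
    rw [← hBu k, ← measure_union _ (hm _ hGC)]
    · exact le_sSup ⟨_, hun _ _ (hB k) hGC, rfl⟩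
    · rw [Set.disjoint_left]
      intro ω h1 h2
      exact hC h2 (Set.mem_iUnion.2 ⟨k, h1⟩)
  have h2 : s + P C ≤ s := le_of_tendsto' (hu.add_const (P C)) h1
  have h3 : s ≠ ⊤ := by
    refine ne_top_of_le_ne_top ENNReal.one_ne_top (sSup_le ?_)
    rintro _ ⟨B, -, rfl⟩
    exact prob_le_one
  exact absurd h2 (not_le.2 (ENNReal.lt_add_right h3 hPC.ne'))


lemma build_measure {Ω : Type*} [MeasurableSpace Ω] (P : Measure Ω) [IsProbabilityMeasure P]
    (𝒳 : Set (Ω → ℝ)) (B : ℕ → Set Ω) (hBm : ∀ k, MeasurableSet (B k))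
    (hB : ∀ k, ∀ ε : ℝ, 0 < ε → ∃ n : ℕ, ∀ X ∈ 𝒳,
      ∫⁻ ω in B k, ENNReal.ofReal (max (|X ω| - n) 0) ∂P ≤ ENNReal.ofReal ε)
    (hU : P (⋃ k, B k)ᶜ = 0) :
    ∃ Q : Measure Ω, IsFiniteMeasure Q ∧ Q ≪ P ∧ P ≪ Q ∧ ∀ ε : ℝ, 0 < ε → ∃ n : ℕ, ∀ X ∈ 𝒳,
      ∫⁻ ω, ENNReal.ofReal (max (|X ω| - n) 0) ∂Q ≤ ENNReal.ofReal ε := by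
  choose n0 hn0 using fun k => hB k 1 one_pos
  have hbd : ∀ k, ∀ n : ℕ, ∀ X ∈ 𝒳, ∫⁻ ω in B k, ENNReal.ofReal (max (|X ω| - n) 0) ∂P
      ≤ ENNReal.ofReal (1 + n0 k) := by
    intro k n X hX
    calc ∫⁻ ω in B k, ENNReal.ofReal (max (|X ω| - n) 0) ∂P
        ≤ ∫⁻ ω in B k, (ENNReal.ofReal (max (|X ω| - n0 k) 0) + ENNReal.ofReal (n0 k)) ∂P := by
          apply lintegral_mono
          intro ω
          dsimp only
          rw [← ENNReal.ofReal_add (le_max_right _ _) (by positivity)]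
          apply ENNReal.ofReal_le_ofReal
          have h1 := le_max_left (|X ω| - n0 k) 0
          have h2 := le_max_right (|X ω| - n0 k) 0
          have h3 : (0 : ℝ) ≤ n0 k := by positivity
          have h4 : (0 : ℝ) ≤ n := by positivity
          apply max_le <;> linarith
      _ = ∫⁻ ω in B k, ENNReal.ofReal (max (|X ω| - n0 k) 0) ∂P + ENNReal.ofReal (n0 k) * P (B k) := by
          rw [lintegral_add_right _ measurable_const, setLIntegral_const]
      _ ≤ ENNReal.ofReal 1 + ENNReal.ofReal (n0 k) * 1 := by
          gcongr
          · exact hn0 k X hX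
          · exact prob_le_one
      _ = ENNReal.ofReal (1 + n0 k) := by
          rw [mul_one, ENNReal.ofReal_add zero_le_one (by positivity)]
  let c : ℕ → ℝ := fun k => 1 / 2 / 2 ^ k / (1 + n0 k)
  have hc : ∀ k, 0 < c k := fun k => by positivity
  have hcle : ∀ k, c k ≤ 1 / 2 / 2 ^ k := fun k =>
    div_le_self (by positivity) (le_add_of_nonneg_right (by positivity))
  have hgeo : ∑' k : ℕ, ENNReal.ofReal (1 / 2 / 2 ^ k) = 1 := by
    rw [← ENNReal.ofReal_tsum_of_nonneg (fun n => by positivity) (summable_geometric_two' 1),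
      tsum_geometric_two', ENNReal.ofReal_one]
  let Q : Measure Ω := Measure.sum fun k => ENNReal.ofReal (c k) • P.restrict (B k)
  have hQl : ∀ f : Ω → ENNReal, ∫⁻ ω, f ω ∂Q = ∑' k, ENNReal.ofReal (c k) * ∫⁻ ω in B k, f ω ∂P := by
    intro f
    simp only [Q, lintegral_sum_measure, lintegral_smul_measure, smul_eq_mul]
  refine ⟨Q, ⟨?_⟩, ?_, ?_, ?_⟩
  · have h1 := hQl (fun _ => 1)
    rw [lintegral_one] at h1
    rw [h1]
    refine lt_of_le_of_lt ?_ ENNReal.one_lt_top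
    refine (ENNReal.tsum_le_tsum fun k => ?_).trans hgeo.le
    rw [setLIntegral_const, one_mul]
    calc ENNReal.ofReal (c k) * P (B k) ≤ ENNReal.ofReal (1 / 2 / 2 ^ k) * 1 := by
          gcongr
          · exact hcle k
          · exact prob_le_one
      _ = _ := mul_one _
  · intro s hs
    simp only [Q]
    rw [Measure.sum_apply_eq_zero]
    intro k
    rw [Measure.smul_apply, Measure.absolutelyContinuous_restrict hs, smul_zero]
  · intro s hs
    simp only [Q] at hs
    rw [Measure.sum_apply_eq_zero] at hs
    have h1 : ∀ k, P (s ∩ B k) = 0 := by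
      intro k
      have := hs k
      rw [Measure.smul_apply, smul_eq_mul, mul_eq_zero, Measure.restrict_apply' (hBm k)] at this
      rcases this with h | h
      · rw [ENNReal.ofReal_eq_zero] at h
        exact absurd (hc k) (not_lt.2 h)
      · exact h
    have h2 : P (⋃ k, s ∩ B k) = 0 := measure_iUnion_null h1
    refine measure_mono_null ?_ (measure_union_null h2 hU)
    intro ω hω
    by_cases h : ω ∈ ⋃ k, B k
    · left; rw [← Set.inter_iUnion]; exact ⟨hω, h⟩
    · right; exact h
  · intro ε hε
    choose n hn using fun k => hB k (ε / 2) (by positivity)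
    obtain ⟨N, hN⟩ : ∃ N : ℕ, 1 / (ε / 2) < 2 ^ N := pow_unbounded_of_one_lt _ (by norm_num)
    refine ⟨(Finset.range N).sup n, fun X hX => ?_⟩
    rw [hQl, ← ENNReal.summable.sum_add_tsum_nat_add' (k := N)]
    have hhead : ∑ k ∈ Finset.range N, ENNReal.ofReal (c k) *
        ∫⁻ ω in B k, ENNReal.ofReal (max (|X ω| - ((Finset.range N).sup n : ℕ)) 0) ∂P
        ≤ ENNReal.ofReal (ε / 2) := by
      calc _ ≤ ∑ k ∈ Finset.range N, ENNReal.ofReal (1 / 2 / 2 ^ k) * ENNReal.ofReal (ε / 2) := by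
            refine Finset.sum_le_sum fun k hk => ?_
            refine mul_le_mul' (ENNReal.ofReal_le_ofReal (hcle k)) (le_trans ?_ (hn k X hX))
            apply lintegral_mono
            intro ω
            apply ENNReal.ofReal_le_ofReal
            have : n k ≤ (Finset.range N).sup n := Finset.le_sup hk
            gcongr
        _ = (∑ k ∈ Finset.range N, ENNReal.ofReal (1 / 2 / 2 ^ k)) * ENNReal.ofReal (ε / 2) := by
            rw [Finset.sum_mul]
        _ ≤ 1 * ENNReal.ofReal (ε / 2) := by
            gcongr
            rw [← hgeo]
            exact ENNReal.sum_le_tsum _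
        _ = _ := one_mul _
    have htail : ∑' k, ENNReal.ofReal (c (k + N)) *
        ∫⁻ ω in B (k + N), ENNReal.ofReal (max (|X ω| - ((Finset.range N).sup n : ℕ)) 0) ∂P
        ≤ ENNReal.ofReal (ε / 2) := by
      calc _ ≤ ∑' k : ℕ, ENNReal.ofReal (1 / 2 / 2 ^ k) * ENNReal.ofReal (1 / 2 ^ N) := by
            refine ENNReal.tsum_le_tsum fun k => ?_
            calc _ ≤ ENNReal.ofReal (c (k + N)) * ENNReal.ofReal (1 + n0 (k + N)) := by
                  gcongr; exact hbd _ _ X hX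
              _ = _ := by
                  rw [← ENNReal.ofReal_mul (hc _).le, ← ENNReal.ofReal_mul (by positivity)]
                  congr 1
                  simp only [c]
                  have : (1 + (n0 (k + N) : ℝ)) ≠ 0 := by positivity
                  rw [div_mul_cancel₀ _ this, pow_add]
                  field_simp
        _ = ENNReal.ofReal (1 / 2 ^ N) := by rw [ENNReal.tsum_mul_right, hgeo, one_mul]
        _ ≤ _ := by
            apply ENNReal.ofReal_le_ofReal
            rw [div_lt_iff₀ (by positivity)] at hN
            rw [div_le_iff₀ (by positivity)]
            linarith
    calc _ ≤ ENNReal.ofReal (ε / 2) + ENNReal.ofReal (ε / 2) := add_le_add hhead htail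
      _ = ENNReal.ofReal ε := by
        rw [← ENNReal.ofReal_add (by positivity) (by positivity), add_halves]

lemma hull_dom {Ω : Type*} [MeasurableSpace Ω] (P : Measure Ω) (𝒳 : Set (Ω → ℝ)) :
    Antitone (OsetAbs P 𝒳) := by
  rintro m n hmn Y ⟨hY, Z, hZ, hYZ⟩
  refine ⟨hY, ?_⟩
  have : convexHull ℝ {f : Ω → ℝ | ∃ X ∈ 𝒳, f = fun ω => max (|X ω| - n) 0} ⊆
      {f | ∃ Z' ∈ convexHull ℝ {f : Ω → ℝ | ∃ X ∈ 𝒳, f = fun ω => max (|X ω| - m) 0},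
        ∀ ω, f ω ≤ Z' ω} := by
    apply convexHull_min
    · rintro _ ⟨X, hX, rfl⟩
      refine ⟨_, subset_convexHull ℝ _ ⟨X, hX, rfl⟩, fun ω => ?_⟩
      dsimp only
      gcongr
    · rintro f ⟨f', hf', hf⟩ g ⟨g', hg', hg⟩ a b ha hb hab
      refine ⟨_, convex_convexHull ℝ _ hf' hg' ha hb hab, fun ω => ?_⟩
      simp only [Pi.add_apply, Pi.smul_apply, smul_eq_mul]
      exact add_le_add (mul_le_mul_of_nonneg_left (hf ω) ha) (mul_le_mul_of_nonneg_left (hg ω) hb)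
  obtain ⟨Z', hZ', hZZ⟩ := this hZ
  exact ⟨Z', hZ', hYZ.mono fun ω h => h.trans (hZZ ω)⟩

lemma oset_convex {Ω : Type*} [MeasurableSpace Ω] (P : Measure Ω) (𝒳 : Set (Ω → ℝ)) (n : ℕ) :
    Convex ℝ (OsetAbs P 𝒳 n) := by
  rintro f ⟨⟨hf1, hf2⟩, f', hf', hf⟩ g ⟨⟨hg1, hg2⟩, g', hg', hg⟩ a b ha hb hab
  refine ⟨⟨(hf1.const_smul a).add (hg1.const_smul b), ?_⟩, _,
    convex_convexHull ℝ _ hf' hg' ha hb hab, ?_⟩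
  · filter_upwards [hf2, hg2] with ω h1 h2
    simp only [Pi.add_apply, Pi.smul_apply, smul_eq_mul]
    exact add_nonneg (mul_nonneg ha h1) (mul_nonneg hb h2)
  · filter_upwards [hf, hg] with ω h1 h2
    simp only [Pi.add_apply, Pi.smul_apply, smul_eq_mul]
    exact add_le_add (mul_le_mul_of_nonneg_left h1 ha) (mul_le_mul_of_nonneg_left h2 hb)

lemma oset_mem {Ω : Type*} [MeasurableSpace Ω] (P : Measure Ω) (𝒳 : Set (Ω → ℝ))
    (hmeas : ∀ X ∈ 𝒳, Measurable X) (n : ℕ) (X : Ω → ℝ) (hX : X ∈ 𝒳) :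
    (fun ω => max (|X ω| - n) 0) ∈ OsetAbs P 𝒳 n := by
  refine ⟨⟨?_, Eventually.of_forall fun ω => le_max_right _ _⟩, _,
    subset_convexHull ℝ _ ⟨X, hX, rfl⟩, Eventually.of_forall fun ω => le_rfl⟩
  have := (hmeas X hX).norm
  exact (this.sub_const _).max measurable_const

lemma ui_of_tail {Ω : Type*} [MeasurableSpace Ω] (Q : Measure Ω) (𝒳 : Set (Ω → ℝ))
    (hmeas : ∀ X ∈ 𝒳, Measurable X)
    (h : ∀ ε : ℝ, 0 < ε → ∃ n : ℕ, ∀ X ∈ 𝒳,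
      ∫⁻ ω, ENNReal.ofReal (max (|X ω| - n) 0) ∂Q ≤ ENNReal.ofReal ε) : UnifIntAbs Q 𝒳 := by
  unfold UnifIntAbs
  rw [ENNReal.tendsto_atTop_zero]
  intro ε hε
  obtain ⟨δ, hδ0, hδ⟩ : ∃ δ : ℝ, 0 < δ ∧ ENNReal.ofReal δ ≤ ε := by
    rcases eq_or_ne ε ⊤ with rfl | htop
    · exact ⟨1, one_pos, le_top⟩
    · exact ⟨ε.toReal, ENNReal.toReal_pos hε.ne' htop, (ENNReal.ofReal_toReal htop).le⟩
  obtain ⟨n, hn⟩ := h (δ / 2) (by positivity)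
  refine ⟨2 * n, fun m hm => iSup₂_le fun X hX => ?_⟩
  have hs : MeasurableSet {ω | (m : ℝ) < |X ω|} := measurableSet_lt measurable_const (hmeas X hX).norm
  calc ∫⁻ ω in {ω | (m : ℝ) < |X ω|}, ENNReal.ofReal (|X ω|) ∂Q
      ≤ ∫⁻ ω in {ω | (m : ℝ) < |X ω|}, ENNReal.ofReal 2 * ENNReal.ofReal (max (|X ω| - n) 0) ∂Q := by
        apply setLIntegral_mono' hs
        intro ω hω
        have hω : (m : ℝ) < |X ω| := hω
        rw [← ENNReal.ofReal_mul zero_le_two]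
        apply ENNReal.ofReal_le_ofReal
        have h1 := le_max_left (|X ω| - n) 0
        have h2 : (2 : ℝ) * n ≤ m := by exact_mod_cast hm
        linarith
    _ ≤ ∫⁻ ω, ENNReal.ofReal 2 * ENNReal.ofReal (max (|X ω| - n) 0) ∂Q := setLIntegral_le_lintegral _ _
    _ = ENNReal.ofReal 2 * ∫⁻ ω, ENNReal.ofReal (max (|X ω| - n) 0) ∂Q :=
        lintegral_const_mul' _ _ ENNReal.ofReal_ne_top
    _ ≤ ENNReal.ofReal 2 * ENNReal.ofReal (δ / 2) := by gcongr; exact hn X hX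
    _ = ENNReal.ofReal δ := by rw [← ENNReal.ofReal_mul zero_le_two]; congr 1; ring
    _ ≤ ε := hδ

lemma easy_dir {Ω : Type*} [MeasurableSpace Ω] (P : Measure Ω)
    (𝒳 : Set (Ω → ℝ)) (hmeas : ∀ X ∈ 𝒳, Measurable X) (Q : Measure Ω) (hQP : Q ≪ P) (hPQ : P ≪ Q)
    (hUI : UnifIntAbs Q 𝒳) (Y : Ω → ℝ) (hY : ∀ n : ℕ, Y ∈ OsetAbs P 𝒳 n) : ∀ᵐ ω ∂P, Y ω = 0 := by
  have hle : ∀ n : ℕ, ∫⁻ ω, ENNReal.ofReal (Y ω) ∂Q ≤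
      ⨆ X ∈ 𝒳, ∫⁻ ω in {ω | (n : ℝ) < |X ω|}, ENNReal.ofReal (|X ω|) ∂Q := by
    intro n
    set a := ⨆ X ∈ 𝒳, ∫⁻ ω in {ω | (n : ℝ) < |X ω|}, ENNReal.ofReal (|X ω|) ∂Q with ha_def
    obtain ⟨-, Z, hZ, hYZ⟩ := hY n
    have hsub : convexHull ℝ {f : Ω → ℝ | ∃ X ∈ 𝒳, f = fun ω => max (|X ω| - n) 0} ⊆
        {f | Measurable f ∧ ∫⁻ ω, ENNReal.ofReal (f ω) ∂Q ≤ a} := by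
      apply convexHull_min
      · rintro _ ⟨X, hX, rfl⟩
        refine ⟨((hmeas X hX).norm.sub_const _).max measurable_const, ?_⟩
        have hs : MeasurableSet {ω | (n : ℝ) < |X ω|} :=
          measurableSet_lt measurable_const (hmeas X hX).norm
        refine le_trans ?_ (le_iSup₂_of_le X hX le_rfl)
        rw [← lintegral_indicator hs]
        apply lintegral_mono
        intro ω
        by_cases hω : (n : ℝ) < |X ω|
        · rw [Set.indicator_of_mem (show ω ∈ {ω | (n : ℝ) < |X ω|} from hω)]
          apply ENNReal.ofReal_le_ofReal
          exact max_le (sub_le_self _ (by positivity)) (abs_nonneg _)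
        · dsimp only
          rw [max_eq_right (by linarith), ENNReal.ofReal_zero]
          exact zero_le
      · rintro f ⟨hf1, hf2⟩ g ⟨hg1, hg2⟩ s t hs ht hst
        refine ⟨(hf1.const_smul s).add (hg1.const_smul t), ?_⟩
        calc ∫⁻ ω, ENNReal.ofReal ((s • f + t • g) ω) ∂Q
            ≤ ∫⁻ ω, (ENNReal.ofReal s * ENNReal.ofReal (f ω) + ENNReal.ofReal t * ENNReal.ofReal (g ω)) ∂Q := by
              apply lintegral_mono
              intro ω
              dsimp only
              rw [← ENNReal.ofReal_mul hs, ← ENNReal.ofReal_mul ht]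
              exact ENNReal.ofReal_add_le
          _ = ENNReal.ofReal s * ∫⁻ ω, ENNReal.ofReal (f ω) ∂Q
              + ENNReal.ofReal t * ∫⁻ ω, ENNReal.ofReal (g ω) ∂Q := by
              rw [lintegral_add_left (hf1.ennreal_ofReal.const_mul _),
                lintegral_const_mul' _ _ ENNReal.ofReal_ne_top,
                lintegral_const_mul' _ _ ENNReal.ofReal_ne_top]
          _ ≤ ENNReal.ofReal s * a + ENNReal.ofReal t * a := by gcongr
          _ = a := by rw [← add_mul, ← ENNReal.ofReal_add hs ht, hst, ENNReal.ofReal_one, one_mul]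
    refine le_trans (lintegral_mono_ae ?_) (hsub hZ).2
    filter_upwards [hQP.ae_le hYZ] with ω h
    exact ENNReal.ofReal_le_ofReal h
  have hz : ∫⁻ ω, ENNReal.ofReal (Y ω) ∂Q = 0 := le_antisymm (ge_of_tendsto' hUI hle) zero_le
  have hYm := (hY 0).1.1
  rw [lintegral_eq_zero_iff hYm.ennreal_ofReal] at hz
  filter_upwards [hPQ.ae_le hz, (hY 0).1.2] with ω h1 h2
  have : ENNReal.ofReal (Y ω) = 0 := h1
  rw [ENNReal.ofReal_eq_zero] at this
  exact le_antisymm this h2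

/-- For an arbitrary `𝒳 ⊆ L⁰`, `⋂ₙ Oₙ = {0}` iff `𝒳` is uniformly `Q`-integrable for
some probability `Q ~ P`. -/
theorem stmt_6 {Ω : Type*} [MeasurableSpace Ω] (P : Measure Ω) [IsProbabilityMeasure P]
    (𝒳 : Set (Ω → ℝ)) (hmeas : ∀ X ∈ 𝒳, Measurable X) :
    (∀ Y : Ω → ℝ, (∀ n : ℕ, Y ∈ OsetAbs P 𝒳 n) → ∀ᵐ ω ∂P, Y ω = 0) ↔
    (∃ Q : Measure Ω, IsProbabilityMeasure Q ∧ Q ≪ P ∧ P ≪ Q ∧ UnifIntAbs Q 𝒳) := by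
  constructor
  · intro hint
    rcases 𝒳.eq_empty_or_nonempty with rfl | ⟨X0, hX0⟩
    · exact ⟨P, inferInstance, Measure.AbsolutelyContinuous.rfl, Measure.AbsolutelyContinuous.rfl,
        ui_of_tail P ∅ hmeas fun ε hε => ⟨0, fun X hX => hX.elim⟩⟩
    have hnn : ∀ n, ∀ f ∈ OsetAbs P 𝒳 n, ∀ᵐ ω ∂P, 0 ≤ f ω := fun n f hf => hf.1.2
    have hme : ∀ n, ∀ f ∈ OsetAbs P 𝒳 n, Measurable f := fun n f hf => hf.1.1
    have huni := uniform_prob P (OsetAbs P 𝒳) hnn hme (oset_convex P 𝒳)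
      (by
        rintro n f ⟨hf, Z, hZ, hfZ⟩ f' hf'm hf'0 hf'
        refine ⟨⟨hf'm, hf'0⟩, Z, hZ, ?_⟩
        filter_upwards [hfZ, hf'] with ω h1 h2 using h2.trans h1)
      (hull_dom P 𝒳) hint
    have hlocal := local_set P (OsetAbs P 𝒳) hnn hme (oset_convex P 𝒳)
      (fun n => ⟨_, oset_mem P 𝒳 hmeas n X0 hX0⟩) huni
    obtain ⟨B, hBG, hU⟩ := exhaust P (fun B => MeasurableSet B ∧ ∀ ε : ℝ, 0 < ε → ∃ n : ℕ, ∀ X ∈ 𝒳,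
        ∫⁻ ω in B, ENNReal.ofReal (max (|X ω| - n) 0) ∂P ≤ ENNReal.ofReal ε)
      (fun B hB => hB.1) ⟨MeasurableSet.empty, fun ε hε => ⟨0, fun X hX => by simp⟩⟩
      (by
        rintro B C ⟨hB, hB2⟩ ⟨hC, hC2⟩
        refine ⟨hB.union hC, fun ε hε => ?_⟩
        obtain ⟨m, hm⟩ := hB2 (ε / 2) (by positivity)
        obtain ⟨n, hn⟩ := hC2 (ε / 2) (by positivity)
        refine ⟨max m n, fun X hX => ?_⟩
        refine (lintegral_union_le _ _ _).trans ?_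
        have h1 : ∫⁻ ω in B, ENNReal.ofReal (max (|X ω| - (max m n : ℕ)) 0) ∂P
            ≤ ENNReal.ofReal (ε / 2) := by
          refine le_trans (lintegral_mono fun ω => ENNReal.ofReal_le_ofReal ?_) (hm X hX)
          have : m ≤ max m n := le_max_left _ _
          gcongr
        have h2 : ∫⁻ ω in C, ENNReal.ofReal (max (|X ω| - (max m n : ℕ)) 0) ∂P
            ≤ ENNReal.ofReal (ε / 2) := by
          refine le_trans (lintegral_mono fun ω => ENNReal.ofReal_le_ofReal ?_) (hn X hX)
          have : n ≤ max m n := le_max_right _ _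
          gcongr
        calc _ ≤ ENNReal.ofReal (ε / 2) + ENNReal.ofReal (ε / 2) := add_le_add h1 h2
          _ = ENNReal.ofReal ε := by
            rw [← ENNReal.ofReal_add (by positivity) (by positivity), add_halves])
      (by
        intro A hA hPA
        obtain ⟨B, hBA, hPB, hBm, hB⟩ := hlocal A hA hPA
        refine ⟨B, hBA, hPB, hBm, fun ε hε => ?_⟩
        obtain ⟨n, hn⟩ := hB ε hε
        exact ⟨n, fun X hX => hn _ (oset_mem P 𝒳 hmeas n X hX)⟩)
    obtain ⟨Q, hQf, hQP, hPQ, hQ⟩ := build_measure P 𝒳 B (fun k => (hBG k).1)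
      (fun k => (hBG k).2) hU
    have hQ0 : Q Set.univ ≠ 0 := by
      intro h
      have := hPQ h
      simp at this
    have hQt : Q Set.univ ≠ ⊤ := measure_ne_top _ _
    have hqt : (Q Set.univ)⁻¹ ≠ ⊤ := ENNReal.inv_ne_top.2 hQ0
    have hq0 : (Q Set.univ)⁻¹ ≠ 0 := ENNReal.inv_ne_zero.2 hQt
    refine ⟨(Q Set.univ)⁻¹ • Q, ⟨?_⟩, ?_, ?_, ?_⟩
    · rw [Measure.smul_apply, smul_eq_mul, ENNReal.inv_mul_cancel hQ0 hQt]
    · intro s hs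
      rw [Measure.smul_apply, hQP hs, smul_zero]
    · intro s hs
      rw [Measure.smul_apply, smul_eq_mul, mul_eq_zero] at hs
      exact hPQ (hs.resolve_left hq0)
    · apply ui_of_tail _ _ hmeas
      intro ε hε
      set q := ((Q Set.univ)⁻¹).toReal with hq
      have hqpos : 0 < q := ENNReal.toReal_pos hq0 hqt
      obtain ⟨n, hn⟩ := hQ (ε / q) (by positivity)
      refine ⟨n, fun X hX => ?_⟩
      rw [lintegral_smul_measure, smul_eq_mul, ← ENNReal.ofReal_toReal hqt, ← hq]
      calc _ ≤ ENNReal.ofReal q * ENNReal.ofReal (ε / q) := by gcongr; exact hn X hX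
        _ = ENNReal.ofReal ε := by
          rw [← ENNReal.ofReal_mul hqpos.le, mul_div_cancel₀ _ hqpos.ne']
  · rintro ⟨Q, -, hQP, hPQ, hUI⟩ Y hY
    exact easy_dir P 𝒳 hmeas Q hQP hPQ hUI Y hY
end
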